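/- Let d₁, d₂ ≥ 1 be integers, s > 0 and V > 0. There exist radii r₁, r₂ > 0 with τ_{d₁} r₁^{d₁} · τ_{d₂} r₂^{d₂} = V such that for every pair of bounded nonempty open connected sets Ω₁ ⊆ ℝ^{d₁}, Ω₂ ⊆ ℝ^{d₂} with |Ω₁||Ω₂| = V one has λ₁( B^{d₁}(0,r₁) × B^{d₂}(0,r₂) ) ≤ λ₁(Ω₁ × Ω₂), where B^{d₁}(0,r₁) and B^{d₂}(0,r₂) are the open balls of radii r₁, r₂ centered at the origins of ℝ^{d₁} and ℝ^{d₂}. -/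

import Mathlib

open MeasureTheory Set Filter

/-- `τ_d = π^{d/2}/Γ(1+d/2)`, the volume of the unit ball in `ℝ^d`. -/
noncomputable def tau (d : ℕ) : ℝ := Real.pi ^ ((d : ℝ) / 2) / Real.Gamma (1 + (d : ℝ) / 2)

/-- First eigenvalue (Rayleigh quotient infimum) of the Grushin operator with Dirichlet
conditions on `Ω ⊆ ℝ^{d₁} × ℝ^{d₂}`. -/
noncomputable def grushinLambda1 (d₁ d₂ : ℕ) (s : ℝ)
    (Ω : Set (EuclideanSpace ℝ (Fin d₁) × EuclideanSpace ℝ (Fin d₂))) : ℝ :=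
  sInf { q : ℝ | ∃ u : EuclideanSpace ℝ (Fin d₁) × EuclideanSpace ℝ (Fin d₂) → ℝ,
    ContDiff ℝ (⊤ : ℕ∞) u ∧ HasCompactSupport u ∧ tsupport u ⊆ Ω ∧ u ≠ 0 ∧
    q = (∫ x in Ω, (‖gradient (fun y => u (y, x.2)) x.1‖ ^ 2
          + ‖x.1‖ ^ (2 * s) * ‖gradient (fun y => u (x.1, y)) x.2‖ ^ 2)) /
        (∫ x in Ω, (u x) ^ 2) }

/-!
On a product domain the `x₂`-part of the Grushin energy splits off, so that `λ₁(Ω₁ × Ω₂)` is the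
ground energy on `Ω₁` of `-Δ + e |x₁|^{2s}`, where `e` is the first Dirichlet eigenvalue of `Ω₂`.
Symmetric decreasing rearrangement lowers both energies, hence `Ω₁` and `Ω₂` may be replaced by
balls of the same volumes. What remains is a function of the single radius `r₁`. It is continuous,
because ground energies scale and depend concavely on the coupling constant `e`. It tends to
infinity at both ends: on small balls by the Poincaré inequality, and on large ones because `e`
blows up, so that a low-energy function concentrates near `x₁ = 0`, which the uncertainty principle
forbids.

The Pólya–Szegő inequality behind the rearrangement step comes from the Prékopa–Leindler inequality:
the sup-convolutions `Q_t f` of `f` and its rearrangement are compared by Brunn–Minkowski on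
superlevel sets, and `∫ Q_t f = ∫ f + (t / 2) ∫ ‖∇f‖ ^ 2 + o(t)`.
-/

open scoped ENNReal Pointwise Topology

section LayerCake

theorem volume_setOf_pos_and_ofReal_lt (m : ℝ≥0∞) :
    volume {c : ℝ | 0 < c ∧ ENNReal.ofReal c < m} = m := by
  induction m with
  | top => simp [Ioi_def]
  | coe m =>
    have h : {c : ℝ | 0 < c ∧ ENNReal.ofReal c < m} = Ioo 0 (m : ℝ) := by
      ext c
      simp only [mem_ofPred_eq, mem_Ioo, and_congr_right_iff]
      intro hc
      rw [ENNReal.ofReal_lt_iff_lt_toReal hc.le ENNReal.coe_ne_top, ENNReal.coe_toReal]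
    rw [h, Real.volume_Ioo, sub_zero, ENNReal.ofReal_coe_nnreal]

theorem lintegral_eq_lintegral_measure_ofReal_lt {α : Type*} [MeasurableSpace α] (μ : Measure α)
    [SFinite μ] {f : α → ℝ≥0∞} (hf : Measurable f) :
    ∫⁻ x, f x ∂μ = ∫⁻ c in Ioi (0 : ℝ), μ {x | ENNReal.ofReal c < f x} := by
  have hS : MeasurableSet {p : α × ℝ | ENNReal.ofReal p.2 < f p.1} :=
    measurableSet_lt (by fun_prop) (by fun_prop)
  calc ∫⁻ x, f x ∂μ
      = ∫⁻ x, volume.restrict (Ioi 0) (Prod.mk x ⁻¹' {p | ENNReal.ofReal p.2 < f p.1}) ∂μ := by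
        refine lintegral_congr fun x => ?_
        rw [Measure.restrict_apply (measurable_prodMk_left hS), inter_comm]
        exact (volume_setOf_pos_and_ofReal_lt (f x)).symm
    _ = ∫⁻ c in Ioi (0 : ℝ), μ ((fun x => (x, c)) ⁻¹' {p | ENNReal.ofReal p.2 < f p.1}) := by
        rw [← Measure.prod_apply hS, Measure.prod_apply_symm hS]

end LayerCake

section PrekopaLeindler

theorem volume_add_volume_le_of_isCompact {K L : Set ℝ} (hK : IsCompact K) (hL : IsCompact L)
    (hK' : K.Nonempty) (hL' : L.Nonempty) : volume K + volume L ≤ volume (K + L) := by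
  obtain ⟨M, hMK, hM⟩ := hK.exists_isGreatest hK'
  obtain ⟨m, hmL, hm⟩ := hL.exists_isLeast hL'
  have hKm : volume (K + {m}) = volume K := by
    rw [add_singleton, image_add_right, measure_preimage_add_right]
  have hML : volume ({M} + L) = volume L := by
    rw [singleton_add, image_add_left, measure_preimage_add]
  have hdisj : AEDisjoint volume (K + {m}) ({M} + L) := by
    refine measure_mono_null (t := {M + m}) ?_ (by simp)
    rintro _ ⟨⟨x, hx, _, rfl, rfl⟩, ⟨_, rfl, y, hy, hxy⟩⟩
    exact (le_antisymm (add_le_add_left (hM hx) _)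
      ((add_le_add_right (hm hy) _).trans_eq hxy) :)
  rw [← hKm, ← hML, ← measure_union₀ (isCompact_singleton.add hL).measurableSet.nullMeasurableSet
    hdisj]
  gcongr
  exact union_subset (add_subset_add_left (singleton_subset_iff.2 hmL))
    (add_subset_add_right (singleton_subset_iff.2 hMK))

theorem volume_add_volume_le {A B : Set ℝ} (hA : MeasurableSet A) (hB : MeasurableSet B)
    (hA' : A.Nonempty) (hB' : B.Nonempty) : volume A + volume B ≤ volume (A + B) := by
  obtain ⟨a, ha⟩ := hA'
  obtain ⟨b, hb⟩ := hB'
  rw [hA.measure_eq_iSup_isCompact, hB.measure_eq_iSup_isCompact]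
  simp only [iSup_and']
  refine ENNReal.biSup_add_biSup_le' (p := fun K => K ⊆ A ∧ IsCompact K)
    (q := fun L => L ⊆ B ∧ IsCompact L) ⟨∅, by simp⟩ ⟨∅, by simp⟩ ?_
  rintro K ⟨hKA, hK⟩ L ⟨hLB, hL⟩
  calc volume K + volume L ≤ volume (insert a K) + volume (insert b L) := by
        gcongr <;> exact subset_insert _ _
    _ ≤ volume (insert a K + insert b L) :=
        volume_add_volume_le_of_isCompact (hK.insert a) (hL.insert b) (insert_nonempty _ _)
          (insert_nonempty _ _)
    _ ≤ volume (A + B) := by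
        gcongr
        exacts [insert_subset ha hKA, insert_subset hb hLB]

theorem ennreal_rpow_mul_rpow_le_add (x y : ℝ≥0∞) {a b : ℝ} (ha : 0 < a) (hb : 0 < b)
    (hab : a + b = 1) :
    x ^ a * y ^ b ≤ ENNReal.ofReal a * x + ENNReal.ofReal b * y := by
  have hx : (x ^ a) ^ a⁻¹ = x := ENNReal.rpow_rpow_inv ha.ne' x
  have hy : (y ^ b) ^ b⁻¹ = y := ENNReal.rpow_rpow_inv hb.ne' y
  have hconj : (a⁻¹).HolderConjugate b⁻¹ :=
    Real.HolderConjugate.inv_inv ha hb hab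
  have h := ENNReal.young_inequality (x ^ a) (y ^ b) hconj
  rwa [hx, hy, ENNReal.ofReal_inv_of_pos ha, ENNReal.ofReal_inv_of_pos hb, div_eq_mul_inv,
    div_eq_mul_inv, inv_inv, inv_inv, mul_comm x, mul_comm y] at h

theorem ennreal_rpow_mul_rpow_self (x : ℝ≥0∞) {a b : ℝ} (ha : 0 < a) (hb : 0 < b)
    (hab : a + b = 1) : x ^ a * x ^ b = x := by
  rw [← ENNReal.rpow_add_of_nonneg _ _ ha.le hb.le, hab, ENNReal.rpow_one]

variable {E F : Type*} [AddCommMonoid E] [Module ℝ E] [MeasurableSpace E]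
  [AddCommMonoid F] [Module ℝ F] [MeasurableSpace F]

/-- The measure `μ` satisfies the Prékopa–Leindler inequality. In contrast with the
Brunn–Minkowski inequality this property visibly passes to products. -/
def PrekopaLeindler (μ : Measure E) : Prop :=
  ∀ ⦃a b : ℝ⦄, 0 < a → 0 < b → a + b = 1 → ∀ ⦃f g h : E → ℝ≥0∞⦄,
    Measurable f → Measurable g → Measurable h →
    (∀ x y, f x ^ a * g y ^ b ≤ h (a • x + b • y)) →
    (∫⁻ x, f x ∂μ) ^ a * (∫⁻ x, g x ∂μ) ^ b ≤ ∫⁻ x, h x ∂μ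

theorem lintegral_add_lintegral_le_of_iSup_eq_one {a b : ℝ} (ha : 0 < a) (hb : 0 < b)
    (hab : a + b = 1) {f g h : ℝ → ℝ≥0∞} (hf : Measurable f) (hg : Measurable g)
    (hh : Measurable h) (hf1 : ⨆ x, f x = 1) (hg1 : ⨆ x, g x = 1)
    (hfgh : ∀ x y, f x ^ a * g y ^ b ≤ h (a • x + b • y)) :
    ENNReal.ofReal a * (∫⁻ x, f x) + ENNReal.ofReal b * ∫⁻ x, g x ≤ ∫⁻ x, h x := by
  have hmeas (k : ℝ → ℝ≥0∞) : Measurable fun c : ℝ => volume {x | ENNReal.ofReal c < k x} :=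
    Antitone.measurable fun c c' hc =>
      measure_mono fun x hx => (ENNReal.ofReal_le_ofReal hc).trans_lt hx
  rw [lintegral_eq_lintegral_measure_ofReal_lt _ hf, lintegral_eq_lintegral_measure_ofReal_lt _ hg,
    lintegral_eq_lintegral_measure_ofReal_lt _ hh, ← lintegral_const_mul _ (hmeas f),
    ← lintegral_const_mul _ (hmeas g), ← lintegral_add_left ((hmeas f).const_mul _)]
  refine lintegral_mono fun c => ?_
  rcases lt_or_ge (ENNReal.ofReal c) 1 with hc | hc
  · have hnonempty {k : ℝ → ℝ≥0∞} (hk : ⨆ x, k x = 1) : {x | ENNReal.ofReal c < k x}.Nonempty :=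
      (lt_iSup_iff.1 (hk ▸ hc)).imp fun _ => id
    have hsmul {r : ℝ} (hr : 0 < r) (A : Set ℝ) :
        ENNReal.ofReal r * volume A = volume (r • A) := by
      rw [Measure.addHaar_smul_of_nonneg _ hr.le, Module.finrank_self, pow_one]
    rw [hsmul ha, hsmul hb]
    refine (volume_add_volume_le ((measurableSet_lt measurable_const hf).const_smul₀ a)
      ((measurableSet_lt measurable_const hg).const_smul₀ b) (hnonempty hf1).smul_set
      (hnonempty hg1).smul_set).trans (measure_mono ?_)
    rintro _ ⟨_, ⟨x, hx, rfl⟩, _, ⟨y, hy, rfl⟩, rfl⟩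
    calc ENNReal.ofReal c = ENNReal.ofReal c ^ a * ENNReal.ofReal c ^ b :=
          (ennreal_rpow_mul_rpow_self _ ha hb hab).symm
      _ < f x ^ a * g y ^ b :=
          ENNReal.mul_lt_mul (ENNReal.rpow_lt_rpow hx ha) (ENNReal.rpow_lt_rpow hy hb)
      _ ≤ h (a • x + b • y) := hfgh x y
  · have hempty {k : ℝ → ℝ≥0∞} (hk : ⨆ x, k x = 1) : {x | ENNReal.ofReal c < k x} = ∅ :=
      eq_empty_of_forall_notMem fun x hx => (hx.trans_le (hk ▸ le_iSup k x)).not_ge hc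
    simp [hempty hf1, hempty hg1]

theorem rpow_lintegral_mul_le_of_iSup_ne_top {a b : ℝ} (ha : 0 < a) (hb : 0 < b)
    (hab : a + b = 1) {f g h : ℝ → ℝ≥0∞} (hf : Measurable f) (hg : Measurable g)
    (hh : Measurable h) (hf' : ⨆ x, f x ≠ ∞) (hg' : ⨆ x, g x ≠ ∞)
    (hfgh : ∀ x y, f x ^ a * g y ^ b ≤ h (a • x + b • y)) :
    (∫⁻ x, f x) ^ a * (∫⁻ x, g x) ^ b ≤ ∫⁻ x, h x := by
  rcases eq_or_ne (⨆ x, f x) 0 with hf0 | hf0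
  · simp [ENNReal.iSup_eq_zero.1 hf0, ENNReal.zero_rpow_of_pos ha]
  rcases eq_or_ne (⨆ x, g x) 0 with hg0 | hg0
  · simp [ENNReal.iSup_eq_zero.1 hg0, ENNReal.zero_rpow_of_pos hb]
  set S := ⨆ x, f x
  set T := ⨆ x, g x
  set c := S⁻¹ ^ a * T⁻¹ ^ b with hc
  have hc0 : c ≠ 0 := by simp [hc, ENNReal.rpow_eq_zero_iff, hf0, hf', hg0, hg']
  have hctop : c ≠ ∞ := by
    simp [hc, ENNReal.mul_eq_top, ENNReal.rpow_eq_top_iff, hf0, hf', hg0, hg']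
  have hmul (x y : ℝ≥0∞) : (S⁻¹ * x) ^ a * (T⁻¹ * y) ^ b = c * (x ^ a * y ^ b) := by
    rw [ENNReal.mul_rpow_of_nonneg _ _ ha.le, ENNReal.mul_rpow_of_nonneg _ _ hb.le,
      mul_mul_mul_comm]
  refine (ENNReal.mul_le_mul_iff_right hc0 hctop).1 ?_
  calc c * ((∫⁻ x, f x) ^ a * (∫⁻ x, g x) ^ b)
      = (∫⁻ x, S⁻¹ * f x) ^ a * (∫⁻ x, T⁻¹ * g x) ^ b := by
        rw [lintegral_const_mul _ hf, lintegral_const_mul _ hg, hmul]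
    _ ≤ ENNReal.ofReal a * (∫⁻ x, S⁻¹ * f x) + ENNReal.ofReal b * ∫⁻ x, T⁻¹ * g x :=
        ennreal_rpow_mul_rpow_le_add _ _ ha hb hab
    _ ≤ ∫⁻ x, c * h x := by
        refine lintegral_add_lintegral_le_of_iSup_eq_one ha hb hab (hf.const_mul _) (hg.const_mul _)
          (hh.const_mul _) ?_ ?_ fun x y => ?_
        · rw [← ENNReal.mul_iSup, ENNReal.inv_mul_cancel hf0 hf']
        · rw [← ENNReal.mul_iSup, ENNReal.inv_mul_cancel hg0 hg']
        · rw [hmul]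
          gcongr
          exact hfgh x y
    _ = c * ∫⁻ x, h x := lintegral_const_mul _ hh

theorem rpow_lintegral_eq_iSup_min {α : Type*} [MeasurableSpace α] (μ : Measure α) {a : ℝ}
    (ha : 0 < a) {f : α → ℝ≥0∞} (hf : Measurable f) :
    (∫⁻ x, f x ∂μ) ^ a = ⨆ n : ℕ, (∫⁻ x, min (f x) n ∂μ) ^ a := by
  have hsup (x : α) : f x = ⨆ n : ℕ, min (f x) n := by
    rw [← inf_iSup_eq, ENNReal.iSup_natCast, inf_top_eq]
  calc (∫⁻ x, f x ∂μ) ^ a = (⨆ n : ℕ, ∫⁻ x, min (f x) n ∂μ) ^ a := by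
        rw [← lintegral_iSup (fun n => hf.min measurable_const)
          fun m n hmn x => inf_le_inf_left _ (Nat.cast_le.2 hmn)]
        simp_rw [← hsup]
    _ = ⨆ n : ℕ, (∫⁻ x, min (f x) n ∂μ) ^ a := (ENNReal.orderIsoRpow a ha).map_iSup _

theorem prekopaLeindler_real : PrekopaLeindler (volume : Measure ℝ) := by
  intro a b ha hb hab f g h hf hg hh hfgh
  rw [rpow_lintegral_eq_iSup_min _ ha hf, rpow_lintegral_eq_iSup_min _ hb hg]
  simp_rw [ENNReal.iSup_mul, ENNReal.mul_iSup]
  have hbdd (k : ℝ → ℝ≥0∞) (n : ℕ) : ⨆ x, min (k x) n ≠ ∞ :=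
    ne_top_of_le_ne_top (ENNReal.natCast_ne_top n) (iSup_le fun x => min_le_right _ _)
  refine iSup₂_le fun m n => rpow_lintegral_mul_le_of_iSup_ne_top ha hb hab
    (hf.min measurable_const) (hg.min measurable_const) hh (hbdd f m) (hbdd g n)
    fun x y => le_trans ?_ (hfgh x y)
  gcongr <;> exact min_le_left _ _

theorem prekopaLeindler_dirac (x : E) : PrekopaLeindler (Measure.dirac x) := by
  intro a b _ _ hab f g h hf hg hh hfgh
  rw [lintegral_dirac' _ hf, lintegral_dirac' _ hg, lintegral_dirac' _ hh]
  simpa only [← add_smul, hab, one_smul] using hfgh x x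

theorem PrekopaLeindler.prod {μ : Measure E} {ν : Measure F} [SFinite ν]
    (hμ : PrekopaLeindler μ) (hν : PrekopaLeindler ν) : PrekopaLeindler (μ.prod ν) := by
  intro a b ha hb hab f g h hf hg hh hfgh
  rw [lintegral_prod _ hf.aemeasurable, lintegral_prod _ hg.aemeasurable,
    lintegral_prod _ hh.aemeasurable]
  refine hμ ha hb hab hf.lintegral_prod_right' hg.lintegral_prod_right' hh.lintegral_prod_right' ?_
  exact fun x y => hν ha hb hab (hf.comp measurable_prodMk_left) (hg.comp measurable_prodMk_left)
    (hh.comp measurable_prodMk_left) fun u v => hfgh (x, u) (y, v)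

theorem PrekopaLeindler.map {μ : Measure E} {ν : Measure F} (hμ : PrekopaLeindler μ)
    {e : E →ₗ[ℝ] F} (he : MeasurePreserving e μ ν) : PrekopaLeindler ν := by
  intro a b ha hb hab f g h hf hg hh hfgh
  rw [← he.lintegral_comp hf, ← he.lintegral_comp hg, ← he.lintegral_comp hh]
  refine hμ ha hb hab (hf.comp he.measurable) (hg.comp he.measurable) (hh.comp he.measurable) ?_
  intro x y
  simpa only [map_add, map_smul] using hfgh (e x) (e y)

theorem prekopaLeindler_pi (n : ℕ) : PrekopaLeindler (volume : Measure (Fin n → ℝ)) := by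
  induction n with
  | zero =>
    exact (Measure.volume_pi_eq_dirac (ι := Fin 0) (α := fun _ => ℝ) 0) ▸ prekopaLeindler_dirac 0
  | succ n ih =>
    have he : MeasurePreserving (Fin.consLinearEquiv ℝ fun _ : Fin (n + 1) => ℝ).toLinearMap
        volume volume := by
      have hcons : ⇑(Fin.consLinearEquiv ℝ fun _ : Fin (n + 1) => ℝ).toLinearMap =
          (MeasurableEquiv.piFinSuccAbove (fun _ : Fin (n + 1) => ℝ) 0).symm :=
        funext fun p => (Fin.insertNth_zero' _ _).symm
      exact hcons ▸ (volume_preserving_piFinSuccAbove (fun _ : Fin (n + 1) => ℝ) 0).symm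
    exact (prekopaLeindler_real.prod ih).map he

theorem prekopaLeindler_volume {E : Type*} [NormedAddCommGroup E] [InnerProductSpace ℝ E]
    [FiniteDimensional ℝ E] [MeasurableSpace E] [BorelSpace E] :
    PrekopaLeindler (volume : Measure E) :=
  ((prekopaLeindler_pi _).map (e := (WithLp.linearEquiv 2 ℝ _).symm.toLinearMap)
    (PiLp.volume_preserving_toLp _)).map
    (e := (stdOrthonormalBasis ℝ E).repr.symm.toLinearEquiv.toLinearMap)
    (stdOrthonormalBasis ℝ E).measurePreserving_repr_symm

theorem PrekopaLeindler.rpow_measure_mul_le {μ : Measure E} (hμ : PrekopaLeindler μ) {a b : ℝ}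
    (ha : 0 < a) (hb : 0 < b) (hab : a + b = 1) {A B : Set E} (hA : MeasurableSet A)
    (hB : MeasurableSet B) : μ A ^ a * μ B ^ b ≤ μ (a • A + b • B) := by
  have hC : MeasurableSet (toMeasurable μ (a • A + b • B)) := measurableSet_toMeasurable _ _
  rw [← measure_toMeasurable (a • A + b • B), ← lintegral_indicator_one hA,
    ← lintegral_indicator_one hB, ← lintegral_indicator_one hC]
  refine hμ ha hb hab (measurable_one.indicator hA) (measurable_one.indicator hB)
    (measurable_one.indicator hC) fun x y => ?_
  by_cases hx : x ∈ A
  · by_cases hy : y ∈ B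
    · have hxy : a • x + b • y ∈ toMeasurable μ (a • A + b • B) :=
        subset_toMeasurable _ _ (add_mem_add (smul_mem_smul_set hx) (smul_mem_smul_set hy))
      simp [hx, hy, hxy]
    · simp [hy, ENNReal.zero_rpow_of_pos hb]
  · simp [hx, ENNReal.zero_rpow_of_pos ha]

end PrekopaLeindler

section Enlargement

variable {E : Type*} [NormedAddCommGroup E] [InnerProductSpace ℝ E] [FiniteDimensional ℝ E]
  [MeasurableSpace E] [BorelSpace E]

theorem volume_ball_add_le {A : Set E} (hA : MeasurableSet A) {R h : ℝ} (hR : 0 < R) (hh : 0 ≤ h)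
    (hAR : volume (Metric.ball (0 : E) R) ≤ volume A) :
    volume (Metric.ball (0 : E) (R + h)) ≤ volume (A + Metric.closedBall (0 : E) h) := by
  rcases hh.eq_or_lt with rfl | hh
  · simpa using hAR
  have hRh : 0 < R + h := by positivity
  have ha : 0 < R / (R + h) := by positivity
  have hb : 0 < h / (R + h) := by positivity
  have hab : R / (R + h) + h / (R + h) = 1 := by rw [← add_div, div_self hRh.ne']
  set a := R / (R + h) with ha'
  set b := h / (R + h) with hb'
  have hscale {r : ℝ} (hr : 0 < r) {c : ℝ} (hc : c * r = R + h) :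
      c • Metric.ball (0 : E) r = Metric.ball 0 (R + h) := by
    have hc0 : 0 < c := pos_of_mul_pos_left (hc ▸ hRh) hr.le
    rw [smul_ball hc0.ne', smul_zero, Real.norm_of_nonneg hc0.le, hc]
  have hA' : volume (Metric.ball (0 : E) (R + h)) ≤ volume (a⁻¹ • A) := by
    rw [← hscale hR (c := a⁻¹) (by rw [ha']; field_simp), Measure.addHaar_smul,
      Measure.addHaar_smul]
    gcongr
  have hB' : Metric.ball (0 : E) (R + h) ⊆ b⁻¹ • Metric.closedBall (0 : E) h := by
    rw [← hscale hh (c := b⁻¹) (by rw [hb']; field_simp)]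
    exact smul_set_mono Metric.ball_subset_closedBall
  calc volume (Metric.ball (0 : E) (R + h))
      = volume (Metric.ball (0 : E) (R + h)) ^ a * volume (Metric.ball (0 : E) (R + h)) ^ b :=
        (ennreal_rpow_mul_rpow_self _ ha hb hab).symm
    _ ≤ volume (a⁻¹ • A) ^ a * volume (b⁻¹ • Metric.closedBall (0 : E) h) ^ b := by
        gcongr
    _ ≤ volume (A + Metric.closedBall (0 : E) h) := by
        refine (prekopaLeindler_volume.rpow_measure_mul_le ha hb hab (hA.const_smul₀ _)
          (measurableSet_closedBall.const_smul₀ _)).trans_eq ?_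
        rw [smul_inv_smul₀ ha.ne', smul_inv_smul₀ hb.ne']

end Enlargement

section Balls

variable {E : Type*} [NormedAddCommGroup E] [InnerProductSpace ℝ E] [FiniteDimensional ℝ E]
  [MeasurableSpace E] [BorelSpace E] [Nontrivial E]

theorem strictMonoOn_volume_ball :
    StrictMonoOn (fun r : ℝ => volume (Metric.ball (0 : E) r)) (Ici 0) := by
  intro r hr r' hr' hrr'
  simp only [Measure.addHaar_ball _ _ hr, Measure.addHaar_ball _ _ hr']
  have h : r ^ Module.finrank ℝ E < r' ^ Module.finrank ℝ E :=
    pow_lt_pow_left₀ hrr' hr Module.finrank_pos.ne'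
  exact ENNReal.mul_lt_mul_left (Metric.measure_ball_pos _ _ one_pos).ne' measure_ball_lt_top.ne
    ((ENNReal.ofReal_lt_ofReal_iff ((pow_nonneg hr _).trans_lt h)).2 h)

theorem exists_volume_ball_eq {m : ℝ≥0∞} (hm : m ≠ ∞) :
    ∃ r : ℝ, 0 ≤ r ∧ volume (Metric.ball (0 : E) r) = m := by
  have h1 : 0 < volume.real (Metric.ball (0 : E) 1) :=
    ENNReal.toReal_pos (Metric.measure_ball_pos _ _ one_pos).ne' measure_ball_lt_top.ne
  refine ⟨(m.toReal / volume.real (Metric.ball (0 : E) 1)) ^ (Module.finrank ℝ E : ℝ)⁻¹,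
    by positivity, ?_⟩
  rw [Measure.addHaar_ball _ _ (by positivity),
    Real.rpow_inv_natCast_pow (by positivity) Module.finrank_pos.ne',
    ← ofReal_measureReal (measure_ball_lt_top.ne), ← ENNReal.ofReal_mul (by positivity),
    div_mul_cancel₀ _ h1.ne', ENNReal.ofReal_toReal hm]

theorem exists_setOf_volume_ball_lt_eq_ball {m : ℝ≥0∞} (hm : m ≠ ∞) :
    ∃ r : ℝ, volume (Metric.ball (0 : E) r) = m ∧
      {x : E | volume (Metric.ball (0 : E) ‖x‖) < m} = Metric.ball 0 r := by
  obtain ⟨r, hr, rfl⟩ := exists_volume_ball_eq (E := E) hm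
  refine ⟨r, rfl, ext fun x => ?_⟩
  rw [mem_ball_zero_iff]
  exact strictMonoOn_volume_ball.lt_iff_lt (norm_nonneg x) hr

theorem volume_setOf_volume_ball_lt (m : ℝ≥0∞) :
    volume {x : E | volume (Metric.ball (0 : E) ‖x‖) < m} = m := by
  rcases eq_or_ne m ∞ with rfl | hm
  · simp [measure_ball_lt_top]
  · obtain ⟨r, hvol, hball⟩ := exists_setOf_volume_ball_lt_eq_ball (E := E) hm
    rw [hball, hvol]

theorem exists_gt_volume_ball_le {r : ℝ} (hr : 0 ≤ r) {m : ℝ≥0∞}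
    (hm : volume (Metric.ball (0 : E) r) < m) : ∃ R > r, volume (Metric.ball (0 : E) R) ≤ m := by
  rcases eq_or_ne m ∞ with rfl | hm'
  · exact ⟨r + 1, lt_add_one r, le_top⟩
  · obtain ⟨R, hR, rfl⟩ := exists_volume_ball_eq (E := E) hm'
    exact ⟨R, (strictMonoOn_volume_ball.lt_iff_lt hr hR).1 hm, le_rfl⟩

end Balls

section Bathtub

theorem measure_sdiff_eq_of_measure_eq {α : Type*} [MeasurableSpace α] {μ : Measure α} {A B : Set α}
    (hA : MeasurableSet A) (hB : MeasurableSet B) (hAB : μ A = μ B) (hB' : μ B ≠ ∞) :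
    μ (A \ B) = μ (B \ A) := by
  have hinter : μ (B ∩ A) ≠ ∞ := measure_ne_top_of_subset inter_subset_left hB'
  refine (ENNReal.add_right_inj hinter).1 ?_
  rw [measure_inter_add_sdiff B hA, inter_comm, measure_inter_add_sdiff A hB, hAB]

theorem setLIntegral_ball_le {E : Type*} [NormedAddCommGroup E] [MeasurableSpace E] [BorelSpace E]
    (μ : Measure E) {w : ℝ → ℝ≥0∞} (hw : Monotone w) {A : Set E} (hA : MeasurableSet A) {r : ℝ}
    (hAr : μ (Metric.ball (0 : E) r) = μ A) (hA' : μ A ≠ ∞) :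
    ∫⁻ x in Metric.ball 0 r, w ‖x‖ ∂μ ≤ ∫⁻ x in A, w ‖x‖ ∂μ := by
  have hball : MeasurableSet (Metric.ball (0 : E) r) := Metric.isOpen_ball.measurableSet
  rw [← lintegral_inter_add_sdiff _ _ hA, ← lintegral_inter_add_sdiff _ A hball, inter_comm A]
  refine add_le_add le_rfl ?_
  calc ∫⁻ x in Metric.ball 0 r \ A, w ‖x‖ ∂μ
      ≤ ∫⁻ _ in Metric.ball (0 : E) r \ A, w r ∂μ :=
        setLIntegral_mono measurable_const fun x hx => hw (mem_ball_zero_iff.1 hx.1).le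
    _ = ∫⁻ _ in A \ Metric.ball (0 : E) r, w r ∂μ := by
        simp only [setLIntegral_const, measure_sdiff_eq_of_measure_eq hball hA hAr hA']
    _ ≤ ∫⁻ x in A \ Metric.ball 0 r, w ‖x‖ ∂μ :=
        setLIntegral_mono (hw.measurable.comp measurable_norm) fun x hx =>
          hw (not_lt.1 fun h => hx.2 (mem_ball_zero_iff.2 h))

end Bathtub

section Rearrangement

variable {E : Type*} [NormedAddCommGroup E] [InnerProductSpace ℝ E] [FiniteDimensional ℝ E]
  [MeasurableSpace E] [BorelSpace E]

/-- The symmetric decreasing rearrangement of `f`: its superlevel sets are open balls about the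
origin with the same volume as those of `f`. Values are in `ℝ≥0∞` so that no integrability or
boundedness is needed for the supremum to be meaningful. -/
noncomputable def symmRearr (f : E → ℝ≥0∞) (x : E) : ℝ≥0∞ :=
  sSup {c | volume (Metric.ball (0 : E) ‖x‖) < volume {y | c < f y}}

theorem lt_symmRearr_iff {f : E → ℝ≥0∞} {c : ℝ≥0∞} {x : E} :
    c < symmRearr f x ↔ volume (Metric.ball (0 : E) ‖x‖) < volume {y | c < f y} := by
  refine ⟨fun h => ?_, fun h => ?_⟩
  · obtain ⟨c', hc', hcc'⟩ := lt_sSup_iff.1 h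
    exact lt_of_lt_of_le hc' (measure_mono fun y hy => hcc'.trans hy)
  · have hc : c < ∞ := by
      obtain ⟨y, hy⟩ := nonempty_of_measure_ne_zero (pos_of_gt h).ne'
      exact lt_of_lt_of_le hy le_top
    obtain ⟨u, hu, hcu, hlim⟩ := exists_seq_strictAnti_tendsto' hc
    have hunion : {y | c < f y} = ⋃ n, {y | u n < f y} := by
      ext y
      simp only [mem_ofPred_eq, mem_iUnion]
      exact ⟨fun hy => (hlim.eventually_lt_const hy).exists,
        fun ⟨n, hn⟩ => (hcu n).1.trans hn⟩
    have hmono : Monotone fun n => {y | u n < f y} :=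
      fun m n hmn y hy => (hu.antitone hmn).trans_lt hy
    rw [hunion, hmono.measure_iUnion, lt_iSup_iff] at h
    obtain ⟨n, hn⟩ := h
    exact (hcu n).1.trans_le (le_sSup hn)

theorem measurable_symmRearr (f : E → ℝ≥0∞) : Measurable (symmRearr f) := by
  have hball : Measurable fun x : E => volume (Metric.ball (0 : E) ‖x‖) :=
    (Monotone.measurable fun _ _ h => measure_mono (Metric.ball_subset_ball h)).comp measurable_norm
  refine measurable_of_Ioi fun c => ?_
  simp only [preimage, mem_Ioi, lt_symmRearr_iff]
  exact measurableSet_lt hball measurable_const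

theorem symmRearr_comp_orderIso (e : ℝ≥0∞ ≃o ℝ≥0∞) (f : E → ℝ≥0∞) (x : E) :
    symmRearr (fun y => e (f y)) x = e (symmRearr f x) :=
  eq_of_forall_lt_iff fun c => by
    simp only [← e.symm_apply_lt, lt_symmRearr_iff]

theorem symmRearr_le {f : E → ℝ≥0∞} {M : ℝ≥0∞} (hf : ∀ y, f y ≤ M) (x : E) :
    symmRearr f x ≤ M :=
  le_of_forall_lt fun c hc => by
    obtain ⟨y, hy⟩ := nonempty_of_measure_ne_zero (pos_of_gt (lt_symmRearr_iff.1 hc)).ne'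
    exact lt_of_lt_of_le hy (hf y)

theorem symmRearr_eq_zero {f : E → ℝ≥0∞} {x : E}
    (hf : volume (Function.support f) ≤ volume (Metric.ball (0 : E) ‖x‖)) : symmRearr f x = 0 := by
  by_contra h
  refine (lt_symmRearr_iff.1 (pos_iff_ne_zero.2 h)).not_ge ?_
  exact (measure_mono fun y (hy : 0 < f y) => hy.ne').trans hf

variable [Nontrivial E]

theorem volume_lt_symmRearr (f : E → ℝ≥0∞) (c : ℝ≥0∞) :
    volume {x | c < symmRearr f x} = volume {x | c < f x} := by
  simp only [lt_symmRearr_iff, volume_setOf_volume_ball_lt]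

theorem lintegral_symmRearr {f : E → ℝ≥0∞} (hf : Measurable f) :
    ∫⁻ x, symmRearr f x = ∫⁻ x, f x := by
  simp only [lintegral_eq_lintegral_measure_ofReal_lt _ hf,
    lintegral_eq_lintegral_measure_ofReal_lt _ (measurable_symmRearr f), volume_lt_symmRearr]

theorem lintegral_mul_symmRearr_le {w : ℝ → ℝ≥0∞} (hw : Monotone w) {f : E → ℝ≥0∞}
    (hf : Measurable f) (hf' : ∫⁻ x, f x ≠ ∞) :
    ∫⁻ x, w ‖x‖ * symmRearr f x ≤ ∫⁻ x, w ‖x‖ * f x := by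
  have hw' : Measurable fun x : E => w ‖x‖ := hw.measurable.comp measurable_norm
  have hmul {g : E → ℝ≥0∞} (hg : Measurable g) : ∫⁻ x, w ‖x‖ * g x =
      ∫⁻ c in Ioi (0 : ℝ), ∫⁻ x in {x | ENNReal.ofReal c < g x}, w ‖x‖ := by
    calc ∫⁻ x, w ‖x‖ * g x = ∫⁻ x, g x ∂volume.withDensity fun x => w ‖x‖ :=
          (lintegral_withDensity_eq_lintegral_mul _ hw' hg).symm
      _ = _ := by
          rw [lintegral_eq_lintegral_measure_ofReal_lt _ hg]
          exact lintegral_congr fun c => withDensity_apply _ (measurableSet_lt measurable_const hg)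
  rw [hmul hf, hmul (measurable_symmRearr f)]
  refine setLIntegral_mono' measurableSet_Ioi fun c hc => ?_
  have hfin : volume {x | ENNReal.ofReal c < f x} ≠ ∞ := by
    refine measure_ne_top_of_subset (fun x (hx : ENNReal.ofReal c < f x) => hx.le) ?_
    have hc' : ENNReal.ofReal c ≠ 0 := (ENNReal.ofReal_pos.2 hc).ne'
    exact ne_top_of_le_ne_top (ENNReal.div_ne_top hf' hc')
      (meas_ge_le_lintegral_div hf.aemeasurable hc' ENNReal.ofReal_ne_top)
  obtain ⟨r, hvol, hball⟩ := exists_setOf_volume_ball_lt_eq_ball (E := E) hfin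
  simp only [lt_symmRearr_iff, hball]
  exact setLIntegral_ball_le _ hw (measurableSet_lt measurable_const hf) hvol hfin

end Rearrangement

section SupConvolution

variable {E : Type*} [NormedAddCommGroup E]

/-- The sup-convolution of `f` with the parabola `‖·‖ ^ 2 / (2 * t)` (the Hopf–Lax semigroup),
with truncated subtraction. -/
noncomputable def supConv (t : ℝ) (f : E → ℝ≥0∞) (x : E) : ℝ≥0∞ :=
  ⨆ y, f y - ENNReal.ofReal (‖x - y‖ ^ 2 / (2 * t))

theorem lt_supConv_iff {t : ℝ} {f : E → ℝ≥0∞} {x : E} {c : ℝ≥0∞} :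
    c < supConv t f x ↔ ∃ y, c + ENNReal.ofReal (‖x - y‖ ^ 2 / (2 * t)) < f y := by
  simp only [supConv, lt_iSup_iff, lt_tsub_iff_right]

variable [MeasurableSpace E]

theorem supConv_lintegral_le (t : ℝ) (f : E → ℝ≥0∞) (ν : Measure E) [IsProbabilityMeasure ν]
    (x : E) : supConv t (fun y => ∫⁻ z, f (y - z) ∂ν) x ≤ ∫⁻ z, supConv t f (x - z) ∂ν := by
  refine iSup_le fun y => ?_
  calc ∫⁻ z, f (y - z) ∂ν - ENNReal.ofReal (‖x - y‖ ^ 2 / (2 * t))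
      = ∫⁻ z, f (y - z) ∂ν - ∫⁻ _, ENNReal.ofReal (‖x - y‖ ^ 2 / (2 * t)) ∂ν := by
        rw [lintegral_const, measure_univ, mul_one]
    _ ≤ ∫⁻ z, (f (y - z) - ENNReal.ofReal (‖x - y‖ ^ 2 / (2 * t))) ∂ν :=
        lintegral_sub_le _ _ measurable_const
    _ ≤ ∫⁻ z, supConv t f (x - z) ∂ν := by
        refine lintegral_mono fun z => le_iSup_of_le (y - z) ?_
        rw [sub_sub_sub_cancel_right]

variable [BorelSpace E]

theorem measurable_supConv (t : ℝ) (f : E → ℝ≥0∞) : Measurable (supConv t f) := by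
  refine LowerSemicontinuous.measurable (lowerSemicontinuous_iff_isOpen_preimage.2 fun c => ?_)
  simp only [preimage, mem_Ioi, lt_supConv_iff, ofPred_exists]
  exact isOpen_iUnion fun y => isOpen_lt
    (continuous_const.add (ENNReal.continuous_ofReal.comp (by fun_prop))) continuous_const

theorem lintegral_supConv_lintegral_le [SecondCountableTopology E] (t : ℝ) (f : E → ℝ≥0∞)
    (μ ν : Measure E) [SFinite μ] [μ.IsAddRightInvariant] [IsProbabilityMeasure ν] :
    ∫⁻ x, supConv t (fun y => ∫⁻ z, f (y - z) ∂ν) x ∂μ ≤ ∫⁻ x, supConv t f x ∂μ := by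
  have hmeas : Measurable fun p : E × E => supConv t f (p.1 - p.2) :=
    (measurable_supConv t f).comp measurable_sub
  calc ∫⁻ x, supConv t (fun y => ∫⁻ z, f (y - z) ∂ν) x ∂μ
      ≤ ∫⁻ x, ∫⁻ z, supConv t f (x - z) ∂ν ∂μ := lintegral_mono (supConv_lintegral_le t f ν)
    _ = ∫⁻ z, ∫⁻ x, supConv t f (x - z) ∂μ ∂ν := lintegral_lintegral_swap hmeas.aemeasurable
    _ = ∫⁻ x, supConv t f x ∂μ := by
        simp only [lintegral_sub_right_eq_self, lintegral_const, measure_univ, mul_one]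

variable [InnerProductSpace ℝ E] [FiniteDimensional ℝ E]

theorem lintegral_supConv_symmRearr_le [Nontrivial E] {t : ℝ} (ht : 0 < t) {f : E → ℝ≥0∞}
    (hf : Measurable f) : ∫⁻ x, supConv t (symmRearr f) x ≤ ∫⁻ x, supConv t f x := by
  rw [lintegral_eq_lintegral_measure_ofReal_lt _ (measurable_supConv t _),
    lintegral_eq_lintegral_measure_ofReal_lt _ (measurable_supConv t f)]
  refine lintegral_mono fun c => ?_
  set S := {x | ENNReal.ofReal c < supConv t f x}
  rw [← volume_setOf_volume_ball_lt (E := E) (volume S)]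
  refine measure_mono fun x hx => ?_
  obtain ⟨y, hy⟩ := lt_supConv_iff.1 hx
  set h := ‖x - y‖
  set A := {z | ENNReal.ofReal c + ENNReal.ofReal (h ^ 2 / (2 * t)) < f z}
  obtain ⟨R, hR, hRA⟩ := exists_gt_volume_ball_le (norm_nonneg y) (lt_symmRearr_iff.1 hy)
  have hAS : A + Metric.closedBall 0 h ⊆ S := by
    rintro _ ⟨z, hz, v, hv, rfl⟩
    refine lt_supConv_iff.2 ⟨z, lt_of_le_of_lt ?_ hz⟩
    rw [add_sub_cancel_left]
    gcongr
    exact mem_closedBall_zero_iff.1 hv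
  have hRpos : 0 < R := (norm_nonneg y).trans_lt hR
  calc volume (Metric.ball (0 : E) ‖x‖)
      < volume (Metric.ball (0 : E) (R + h)) := by
        refine strictMonoOn_volume_ball (norm_nonneg x) (by positivity : 0 ≤ R + h) ?_
        exact (norm_le_norm_add_norm_sub' x y).trans_lt (by gcongr)
    _ ≤ volume (A + Metric.closedBall 0 h) :=
        volume_ball_add_le (measurableSet_lt measurable_const hf) hRpos (norm_nonneg _) hRA
    _ ≤ volume S := measure_mono hAS

end SupConvolution

section QuadraticExpansion

theorem exists_abs_sub_sub_fderiv_le {E : Type*} [NormedAddCommGroup E] [NormedSpace ℝ E]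
    {φ : E → ℝ} (h : ContDiff ℝ 2 φ) (hc : HasCompactSupport φ) :
    ∃ K : ℝ, ∀ x y, |φ y - φ x - fderiv ℝ φ x (y - x)| ≤ K * ‖y - x‖ ^ 2 := by
  obtain ⟨K, hK⟩ := (h.fderiv_right (m := 1) (by norm_num)).lipschitzWith_of_hasCompactSupport
    (hc.fderiv ℝ) one_ne_zero
  refine ⟨K, fun x y => ?_⟩
  rw [← Real.norm_eq_abs, sq, ← mul_assoc]
  refine (convex_segment x y).norm_image_sub_le_of_norm_fderiv_le' (𝕜 := ℝ)
    (fun z _ => h.differentiable two_ne_zero z) (fun z hz => ?_) (left_mem_segment ℝ x y)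
    (right_mem_segment ℝ x y)
  calc ‖fderiv ℝ φ z - fderiv ℝ φ x‖ ≤ K * ‖z - x‖ := hK.norm_sub_le z x
    _ ≤ K * ‖y - x‖ := by
        gcongr
        exact norm_sub_le_of_mem_segment hz

variable {E : Type*} [NormedAddCommGroup E] [InnerProductSpace ℝ E] {φ : E → ℝ} {K t : ℝ}

theorem supConv_enorm_le (ht : 0 < t) (hKt : 2 * K * t < 1)
    (hK : ∀ x y, |φ y - φ x - fderiv ℝ φ x (y - x)| ≤ K * ‖y - x‖ ^ 2) (x : E) :
    supConv t (fun y => ‖φ y‖ₑ) x ≤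
      ENNReal.ofReal (|φ x| + t / (2 * (1 - 2 * K * t)) * ‖fderiv ℝ φ x‖ ^ 2) := by
  refine iSup_le fun y => ?_
  beta_reduce
  rw [Real.enorm_eq_ofReal_abs, ← ENNReal.ofReal_sub _ (by positivity), norm_sub_rev]
  refine ENNReal.ofReal_le_ofReal ?_
  set a := ‖fderiv ℝ φ x‖
  set h := ‖y - x‖
  set q := 1 - 2 * K * t with hq
  have hq0 : 0 < q := sub_pos.2 hKt
  have hexp : |φ y| ≤ |φ x| + a * h + K * h ^ 2 := by
    have hlin : |fderiv ℝ φ x (y - x)| ≤ a * h := (fderiv ℝ φ x).le_opNorm _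
    calc |φ y| = |φ x + fderiv ℝ φ x (y - x) + (φ y - φ x - fderiv ℝ φ x (y - x))| := by
          congr 1; ring
      _ ≤ _ := (abs_add_three _ _ _).trans (by gcongr; exact hK x y)
  have hsq : t / (2 * q) * a ^ 2 - (a * h + K * h ^ 2 - h ^ 2 / (2 * t)) =
      (t * a - q * h) ^ 2 / (2 * q * t) := by
    have hK' : K = (1 - q) / (2 * t) := by rw [hq]; field_simp; ring
    rw [hK']
    field_simp
    ring
  have hsq0 : 0 ≤ (t * a - q * h) ^ 2 / (2 * q * t) := by positivity
  linarith

theorem le_supConv_ofReal [CompleteSpace E] (ht : 0 < t)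
    (hK : ∀ x y, |φ y - φ x - fderiv ℝ φ x (y - x)| ≤ K * ‖y - x‖ ^ 2) (x : E) :
    ENNReal.ofReal (φ x + t / 2 * (1 - 2 * K * t) * ‖fderiv ℝ φ x‖ ^ 2) ≤
      supConv t (fun y => ENNReal.ofReal (φ y)) x := by
  set v := gradient φ x with hv
  have hnorm : ‖v‖ = ‖fderiv ℝ φ x‖ := LinearIsometryEquiv.norm_map _ _
  have hinner : fderiv ℝ φ x v = ‖v‖ ^ 2 := by
    rw [← real_inner_self_eq_norm_sq, hv, inner_gradient_left]
  refine le_iSup_of_le (x + t • v) ?_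
  beta_reduce
  rw [← ENNReal.ofReal_sub _ (by positivity)]
  refine ENNReal.ofReal_le_ofReal ?_
  have hlower := (abs_le.1 (hK x (x + t • v))).1
  rw [add_sub_cancel_left, map_smul, hinner, norm_smul, Real.norm_of_nonneg ht.le,
    smul_eq_mul] at hlower
  rw [sub_add_cancel_left, norm_neg, norm_smul, Real.norm_of_nonneg ht.le, ← hnorm]
  have hquad : (t * ‖v‖) ^ 2 / (2 * t) = t / 2 * ‖v‖ ^ 2 := by field_simp
  linarith

end QuadraticExpansion

section DirichletComparison

variable {E : Type*} [NormedAddCommGroup E] [InnerProductSpace ℝ E] [FiniteDimensional ℝ E]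
  [MeasurableSpace E] [BorelSpace E]

theorem integrable_norm_fderiv_sq {φ : E → ℝ} (h : ContDiff ℝ 1 φ) (hc : HasCompactSupport φ) :
    Integrable fun x => ‖fderiv ℝ φ x‖ ^ 2 := by
  refine ((h.continuous_fderiv one_ne_zero).norm.pow 2).integrable_of_hasCompactSupport ?_
  refine (hc.fderiv ℝ).mono fun x hx => ?_
  exact norm_ne_zero_iff.1 (ne_zero_pow two_ne_zero hx)

variable {φ g : E → ℝ}

theorem sq_mul_integral_norm_fderiv_sq_le {K t : ℝ} (ht : 0 < t) (hKt : 2 * K * t < 1)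
    (hφ : ContDiff ℝ 1 φ) (hφc : HasCompactSupport φ) (hg : ContDiff ℝ 1 g)
    (hgc : HasCompactSupport g) (hg0 : ∀ x, 0 ≤ g x) (hint : ∫ x, g x = ∫ x, |φ x|)
    (hKφ : ∀ x y, |φ y - φ x - fderiv ℝ φ x (y - x)| ≤ K * ‖y - x‖ ^ 2)
    (hKg : ∀ x y, |g y - g x - fderiv ℝ g x (y - x)| ≤ K * ‖y - x‖ ^ 2)
    (hsup : ∫⁻ x, supConv t (fun y => ENNReal.ofReal (g y)) x ≤
      ∫⁻ x, supConv t (fun y => ‖φ y‖ₑ) x) :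
    (1 - 2 * K * t) ^ 2 * ∫ x, ‖fderiv ℝ g x‖ ^ 2 ≤ ∫ x, ‖fderiv ℝ φ x‖ ^ 2 := by
  have hq : 0 < 1 - 2 * K * t := sub_pos.2 hKt
  have hgi : Integrable g := hg.continuous.integrable_of_hasCompactSupport hgc
  have hφi : Integrable fun x => |φ x| := (hφ.continuous.integrable_of_hasCompactSupport hφc).abs
  have hgi' := (integrable_norm_fderiv_sq hg hgc).const_mul (t / 2 * (1 - 2 * K * t))
  have hφi' := (integrable_norm_fderiv_sq hφ hφc).const_mul (t / (2 * (1 - 2 * K * t)))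
  have hle : ∫ x, g x + t / 2 * (1 - 2 * K * t) * ‖fderiv ℝ g x‖ ^ 2 ≤
      ∫ x, |φ x| + t / (2 * (1 - 2 * K * t)) * ‖fderiv ℝ φ x‖ ^ 2 := by
    have hφ0 (x : E) : 0 ≤ |φ x| + t / (2 * (1 - 2 * K * t)) * ‖fderiv ℝ φ x‖ ^ 2 := by positivity
    have hg0' (x : E) : 0 ≤ g x + t / 2 * (1 - 2 * K * t) * ‖fderiv ℝ g x‖ ^ 2 :=
      add_nonneg (hg0 x) (by positivity)
    refine (ENNReal.ofReal_le_ofReal_iff (integral_nonneg hφ0)).1 ?_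
    calc ENNReal.ofReal (∫ x, g x + t / 2 * (1 - 2 * K * t) * ‖fderiv ℝ g x‖ ^ 2)
        = ∫⁻ x, ENNReal.ofReal (g x + t / 2 * (1 - 2 * K * t) * ‖fderiv ℝ g x‖ ^ 2) :=
          ofReal_integral_eq_lintegral_ofReal (hgi.add hgi') (Eventually.of_forall hg0')
      _ ≤ ∫⁻ x, supConv t (fun y => ENNReal.ofReal (g y)) x :=
          lintegral_mono (le_supConv_ofReal ht hKg)
      _ ≤ ∫⁻ x, supConv t (fun y => ‖φ y‖ₑ) x := hsup
      _ ≤ ∫⁻ x, ENNReal.ofReal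
            (|φ x| + t / (2 * (1 - 2 * K * t)) * ‖fderiv ℝ φ x‖ ^ 2) :=
          lintegral_mono (supConv_enorm_le ht hKt hKφ)
      _ = ENNReal.ofReal (∫ x, |φ x| + t / (2 * (1 - 2 * K * t)) * ‖fderiv ℝ φ x‖ ^ 2) :=
          (ofReal_integral_eq_lintegral_ofReal (hφi.add hφi') (Eventually.of_forall hφ0)).symm
  rw [integral_add hgi hgi', integral_add hφi hφi', integral_const_mul, integral_const_mul,
    hint, add_le_add_iff_left] at hle
  calc (1 - 2 * K * t) ^ 2 * ∫ x, ‖fderiv ℝ g x‖ ^ 2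
      = 2 * (1 - 2 * K * t) / t * (t / 2 * (1 - 2 * K * t) * ∫ x, ‖fderiv ℝ g x‖ ^ 2) := by
        field_simp
    _ ≤ 2 * (1 - 2 * K * t) / t *
          (t / (2 * (1 - 2 * K * t)) * ∫ x, ‖fderiv ℝ φ x‖ ^ 2) := by gcongr
    _ = ∫ x, ‖fderiv ℝ φ x‖ ^ 2 := by
        generalize 1 - 2 * K * t = q at hq
        field_simp

theorem integral_norm_fderiv_sq_le_of_supConv_le (hφ : ContDiff ℝ 2 φ) (hφc : HasCompactSupport φ)
    (hg : ContDiff ℝ 2 g) (hgc : HasCompactSupport g) (hg0 : ∀ x, 0 ≤ g x)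
    (hint : ∫ x, g x = ∫ x, |φ x|)
    (hsup : ∀ t > 0, ∫⁻ x, supConv t (fun y => ENNReal.ofReal (g y)) x ≤
      ∫⁻ x, supConv t (fun y => ‖φ y‖ₑ) x) :
    ∫ x, ‖fderiv ℝ g x‖ ^ 2 ≤ ∫ x, ‖fderiv ℝ φ x‖ ^ 2 := by
  obtain ⟨K₁, hK₁⟩ := exists_abs_sub_sub_fderiv_le hφ hφc
  obtain ⟨K₂, hK₂⟩ := exists_abs_sub_sub_fderiv_le hg hgc
  set K := max K₁ K₂
  have hlim {f : ℝ → ℝ} (hf : Continuous f) : Tendsto f (𝓝[>] 0) (𝓝 (f 0)) :=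
    (hf.tendsto 0).mono_left nhdsWithin_le_nhds
  have hscaled : Tendsto (fun t : ℝ => (1 - 2 * K * t) ^ 2 * ∫ x, ‖fderiv ℝ g x‖ ^ 2) (𝓝[>] 0)
      (𝓝 (∫ x, ‖fderiv ℝ g x‖ ^ 2)) := by
    convert hlim (f := fun t => (1 - 2 * K * t) ^ 2 * ∫ x, ‖fderiv ℝ g x‖ ^ 2) (by fun_prop) using 2
    ring
  have hsmall : ∀ᶠ t in 𝓝[>] (0 : ℝ), 2 * K * t < 1 :=
    (hlim (f := fun t => 2 * K * t) (by fun_prop)).eventually_lt_const (by simp)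
  refine le_of_tendsto hscaled ?_
  filter_upwards [hsmall, self_mem_nhdsWithin] with t hKt ht
  refine sq_mul_integral_norm_fderiv_sq_le ht hKt (hφ.of_le one_le_two) hφc (hg.of_le one_le_two)
    hgc hg0 hint (fun x y => (hK₁ x y).trans ?_) (fun x y => (hK₂ x y).trans ?_) (hsup t ht)
  · gcongr; exact le_max_left _ _
  · gcongr; exact le_max_right _ _

end DirichletComparison

section MollifiedRearrangement

variable {E : Type*} [NormedAddCommGroup E] [InnerProductSpace ℝ E] [FiniteDimensional ℝ E]
  [MeasurableSpace E] [BorelSpace E]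

/-- The symmetric decreasing rearrangement of `|φ|`, as a real-valued function. -/
noncomputable def absRearr (φ : E → ℝ) (x : E) : ℝ := (symmRearr (fun y => ‖φ y‖ₑ) x).toReal

theorem absRearr_nonneg (φ : E → ℝ) (x : E) : 0 ≤ absRearr φ x := ENNReal.toReal_nonneg

theorem measurable_absRearr (φ : E → ℝ) : Measurable (absRearr φ) :=
  (measurable_symmRearr _).ennreal_toReal

theorem symmRearr_enorm_le {φ : E → ℝ} {M : ℝ} (hM : ∀ x, |φ x| ≤ M) (x : E) :
    symmRearr (fun y => ‖φ y‖ₑ) x ≤ ENNReal.ofReal M :=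
  symmRearr_le (fun y => by
    rw [Real.enorm_eq_ofReal_abs]; exact ENNReal.ofReal_le_ofReal (hM y)) x

theorem absRearr_eq_zero {φ : E → ℝ} {R : ℝ}
    (hR : volume (Function.support φ) ≤ volume (Metric.ball (0 : E) R)) {x : E} (hx : R ≤ ‖x‖) :
    absRearr φ x = 0 := by
  have hsupp : (Function.support fun y => ‖φ y‖ₑ) = Function.support φ := by
    ext y
    simp only [Function.mem_support, ne_eq, enorm_eq_zero]
  rw [absRearr, symmRearr_eq_zero, ENNReal.toReal_zero]
  rw [hsupp]
  exact hR.trans (measure_mono (Metric.ball_subset_ball hx))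

theorem ofReal_absRearr_sq {φ : E → ℝ} {M : ℝ} (hM : ∀ x, |φ x| ≤ M) (x : E) :
    ENNReal.ofReal (absRearr φ x ^ 2) = symmRearr (fun y => ENNReal.ofReal (φ y ^ 2)) x := by
  have hsq (a : ℝ) : ENNReal.ofReal (a ^ 2) = ‖a‖ₑ ^ 2 := by
    rw [Real.enorm_eq_ofReal_abs, ← ENNReal.ofReal_pow (abs_nonneg a), sq_abs]
  have hfin : symmRearr (fun y => ‖φ y‖ₑ) x ≠ ∞ :=
    ne_top_of_le_ne_top ENNReal.ofReal_ne_top (symmRearr_enorm_le hM x)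
  rw [absRearr, ENNReal.ofReal_pow ENNReal.toReal_nonneg, ENNReal.ofReal_toReal hfin]
  simpa only [hsq, ENNReal.orderIsoRpow_apply, ENNReal.rpow_ofNat] using
    (symmRearr_comp_orderIso (ENNReal.orderIsoRpow 2 two_pos) (fun y => ‖φ y‖ₑ) x).symm

/-- The symmetric decreasing rearrangement of `|φ|`, mollified by the bump `ρ`. -/
noncomputable def mollRearr (ρ : ContDiffBump (0 : E)) (φ : E → ℝ) : E → ℝ :=
  convolution (ρ.normed volume) (absRearr φ) (ContinuousLinearMap.lsmul ℝ ℝ) volume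

variable (ρ : ContDiffBump (0 : E)) {φ : E → ℝ}

theorem mollRearr_nonneg (x : E) : 0 ≤ mollRearr ρ φ x :=
  integral_nonneg fun z => mul_nonneg (ρ.nonneg_normed z) (absRearr_nonneg φ _)

theorem mollRearr_eq_zero {R : ℝ}
    (hR : volume (Function.support φ) ≤ volume (Metric.ball (0 : E) R)) {x : E}
    (hx : R + ρ.rOut ≤ ‖x‖) : mollRearr ρ φ x = 0 := by
  refine integral_eq_zero_of_ae (Eventually.of_forall fun z => ?_)
  by_cases hz : z ∈ Function.support (ρ.normed volume)
  · rw [ρ.support_normed_eq, mem_ball_zero_iff] at hz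
    have hxz : R ≤ ‖x - z‖ := by linarith [norm_sub_norm_le x z]
    simp [absRearr_eq_zero hR hxz]
  · simp [Function.notMem_support.1 hz]

theorem tsupport_mollRearr_subset {R : ℝ}
    (hR : volume (Function.support φ) ≤ volume (Metric.ball (0 : E) R)) :
    tsupport (mollRearr ρ φ) ⊆ Metric.closedBall 0 (R + ρ.rOut) :=
  closure_minimal (fun _ hx => mem_closedBall_zero_iff.2 <| not_lt.1 fun h =>
    hx (mollRearr_eq_zero ρ hR h.le)) Metric.isClosed_closedBall

/-- The probability measure whose density is the normalized bump `ρ`. -/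
noncomputable def bumpMeasure : Measure E :=
  volume.withDensity fun z => ENNReal.ofReal (ρ.normed volume z)

instance : IsProbabilityMeasure (bumpMeasure ρ) where
  measure_univ := by
    rw [bumpMeasure, withDensity_apply _ MeasurableSet.univ, setLIntegral_univ,
      ← ofReal_integral_eq_lintegral_ofReal ρ.integrable_normed
        (Eventually.of_forall ρ.nonneg_normed), ρ.integral_normed, ENNReal.ofReal_one]

theorem ofReal_mollRearr_le (x : E) :
    ENNReal.ofReal (mollRearr ρ φ x) ≤
      ∫⁻ z, symmRearr (fun y => ‖φ y‖ₑ) (x - z) ∂bumpMeasure ρ := by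
  have hρ : Measurable (ρ.normed volume) := ρ.continuous_normed.measurable
  have hsub : Measurable fun z => x - z := measurable_const.sub measurable_id
  have hint : mollRearr ρ φ x =
      (∫⁻ z, ENNReal.ofReal (ρ.normed volume z * absRearr φ (x - z))).toReal :=
    integral_eq_lintegral_of_nonneg_ae
      (Eventually.of_forall fun z => mul_nonneg (ρ.nonneg_normed z) (absRearr_nonneg φ _))
      (hρ.mul ((measurable_absRearr φ).comp hsub)).aestronglyMeasurable
  rw [hint, bumpMeasure, lintegral_withDensity_eq_lintegral_mul _ hρ.ennreal_ofReal
    (show Measurable fun z => symmRearr (fun y => ‖φ y‖ₑ) (x - z) from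
      (measurable_symmRearr _).comp hsub)]
  refine ENNReal.ofReal_toReal_le.trans (lintegral_mono fun z => ?_)
  rw [ENNReal.ofReal_mul (ρ.nonneg_normed z), Pi.mul_apply]
  gcongr
  exact ENNReal.ofReal_toReal_le

theorem mollRearr_le {M : ℝ} (hM : 0 ≤ M) (hφ : ∀ x, |φ x| ≤ M) (x : E) : mollRearr ρ φ x ≤ M := by
  refine (ENNReal.ofReal_le_ofReal_iff hM).1 ((ofReal_mollRearr_le ρ x).trans ?_)
  calc ∫⁻ z, symmRearr (fun y => ‖φ y‖ₑ) (x - z) ∂bumpMeasure ρ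
      ≤ ∫⁻ _, ENNReal.ofReal M ∂bumpMeasure ρ := lintegral_mono fun z => symmRearr_enorm_le hφ _
    _ = ENNReal.ofReal M := by rw [lintegral_const, measure_univ, mul_one]

variable [Nontrivial E]

theorem lintegral_symmRearr_enorm_ne_top {φ : E → ℝ} (hm : Measurable φ) (hφ : Integrable φ) :
    ∫⁻ x, symmRearr (fun y => ‖φ y‖ₑ) x ≠ ∞ :=
  (lintegral_symmRearr hm.enorm).trans_ne hφ.2.ne

theorem integrable_absRearr {φ : E → ℝ} (hm : Measurable φ) (hφ : Integrable φ) :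
    Integrable (absRearr φ) :=
  integrable_toReal_of_lintegral_ne_top (measurable_symmRearr _).aemeasurable
    (lintegral_symmRearr_enorm_ne_top hm hφ)

theorem integral_absRearr {φ : E → ℝ} (hm : Measurable φ) (hφ : Integrable φ) :
    ∫ x, absRearr φ x = ∫ x, |φ x| := by
  calc ∫ x, absRearr φ x = (∫⁻ x, symmRearr (fun y => ‖φ y‖ₑ) x).toReal :=
        integral_toReal (measurable_symmRearr _).aemeasurable
          (ae_lt_top (measurable_symmRearr _) (lintegral_symmRearr_enorm_ne_top hm hφ))
    _ = ∫ x, ‖φ x‖ := by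
        rw [lintegral_symmRearr hm.enorm, integral_norm_eq_lintegral_enorm hm.aestronglyMeasurable]

theorem integral_absRearr_sq {φ : E → ℝ} (hm : Measurable φ) {M : ℝ} (hM : ∀ x, |φ x| ≤ M) :
    ∫ x, absRearr φ x ^ 2 = ∫ x, φ x ^ 2 := by
  rw [integral_eq_lintegral_of_nonneg_ae (Eventually.of_forall fun x => sq_nonneg _)
      ((measurable_absRearr φ).pow_const 2).aestronglyMeasurable,
    integral_eq_lintegral_of_nonneg_ae (Eventually.of_forall fun x => sq_nonneg _)
      (hm.pow_const 2).aestronglyMeasurable]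
  simp only [ofReal_absRearr_sq hM, lintegral_symmRearr (hm.pow_const 2).ennreal_ofReal]

theorem integral_mul_absRearr_sq_le {w : ℝ → ℝ} (hw : MonotoneOn w (Ici 0)) (hw0 : 0 ≤ w 0)
    {φ : E → ℝ} (hm : Measurable φ) {M : ℝ} (hM : ∀ x, |φ x| ≤ M)
    (hφ : Integrable fun x => φ x ^ 2) (hwφ : Integrable fun x => w ‖x‖ * φ x ^ 2) :
    ∫ x, w ‖x‖ * absRearr φ x ^ 2 ≤ ∫ x, w ‖x‖ * φ x ^ 2 := by
  have hw0' (x : E) : 0 ≤ w ‖x‖ :=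
    hw0.trans (hw self_mem_Ici (norm_nonneg x) (norm_nonneg x))
  have hw' : Monotone fun r => ENNReal.ofReal (w (max r 0)) := fun a b hab =>
    ENNReal.ofReal_le_ofReal (hw (le_max_right a 0) (le_max_right b 0) (max_le_max_right 0 hab))
  have hwm : Measurable fun x : E => w ‖x‖ := by
    have hmono : Monotone fun r => w (max r 0) := fun a b hab =>
      hw (le_max_right a 0) (le_max_right b 0) (max_le_max_right 0 hab)
    simpa only [Function.comp_def, max_eq_left (norm_nonneg _)] using
      hmono.measurable.comp (measurable_norm (α := E))
  have hle : ∫⁻ x, ENNReal.ofReal (w ‖x‖ * absRearr φ x ^ 2) ≤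
      ∫⁻ x, ENNReal.ofReal (w ‖x‖ * φ x ^ 2) := by
    simpa only [ENNReal.ofReal_mul (hw0' _), ofReal_absRearr_sq hM,
      max_eq_left (norm_nonneg _)] using
      lintegral_mul_symmRearr_le hw' (hm.pow_const 2).ennreal_ofReal
        hφ.lintegral_lt_top.ne
  rw [integral_eq_lintegral_of_nonneg_ae
      (Eventually.of_forall fun x => mul_nonneg (hw0' x) (sq_nonneg _))
      (hwm.mul ((measurable_absRearr φ).pow_const 2)).aestronglyMeasurable,
    integral_eq_lintegral_of_nonneg_ae
      (Eventually.of_forall fun x => mul_nonneg (hw0' x) (sq_nonneg _)) hwφ.1]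
  exact ENNReal.toReal_mono hwφ.lintegral_lt_top.ne hle

theorem contDiff_mollRearr {n : ℕ∞} (hm : Measurable φ) (hφ : Integrable φ) :
    ContDiff ℝ n (mollRearr ρ φ) :=
  ρ.hasCompactSupport_normed.contDiff_convolution_left _ ρ.contDiff_normed
    (integrable_absRearr hm hφ).locallyIntegrable

theorem integral_mollRearr (hm : Measurable φ) (hφ : Integrable φ) :
    ∫ x, mollRearr ρ φ x = ∫ x, |φ x| := by
  rw [mollRearr, integral_convolution _ ρ.integrable_normed (integrable_absRearr hm hφ),
    ρ.integral_normed, ContinuousLinearMap.lsmul_apply, one_smul, integral_absRearr hm hφ]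

theorem lintegral_supConv_mollRearr_le {t : ℝ} (ht : 0 < t) (hφ : Measurable φ) :
    ∫⁻ x, supConv t (fun y => ENNReal.ofReal (mollRearr ρ φ y)) x ≤
      ∫⁻ x, supConv t (fun y => ‖φ y‖ₑ) x := by
  calc ∫⁻ x, supConv t (fun y => ENNReal.ofReal (mollRearr ρ φ y)) x
      ≤ ∫⁻ x, supConv t
          (fun y => ∫⁻ z, symmRearr (fun y => ‖φ y‖ₑ) (y - z) ∂bumpMeasure ρ) x :=
        lintegral_mono fun x => iSup_mono fun y => tsub_le_tsub_right (ofReal_mollRearr_le ρ y) _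
    _ ≤ ∫⁻ x, supConv t (symmRearr fun y => ‖φ y‖ₑ) x :=
        lintegral_supConv_lintegral_le t _ volume (bumpMeasure ρ)
    _ ≤ ∫⁻ x, supConv t (fun y => ‖φ y‖ₑ) x := lintegral_supConv_symmRearr_le ht hφ.enorm

theorem integral_norm_fderiv_mollRearr_sq_le (hφ : ContDiff ℝ 2 φ) (hc : HasCompactSupport φ) :
    ∫ x, ‖fderiv ℝ (mollRearr ρ φ) x‖ ^ 2 ≤ ∫ x, ‖fderiv ℝ φ x‖ ^ 2 := by
  have hm : Measurable φ := hφ.continuous.measurable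
  have hi : Integrable φ := hφ.continuous.integrable_of_hasCompactSupport hc
  obtain ⟨R, -, hR⟩ := exists_volume_ball_eq (E := E)
    (measure_ne_top_of_subset subset_closure hc.measure_lt_top.ne :
      volume (Function.support φ) ≠ ∞)
  have hsupp : HasCompactSupport (mollRearr ρ φ) :=
    (isCompact_closedBall _ _).of_isClosed_subset isClosed_closure
      (tsupport_mollRearr_subset ρ hR.ge)
  exact integral_norm_fderiv_sq_le_of_supConv_le hφ hc (contDiff_mollRearr (n := 2) ρ hm hi) hsupp
    (mollRearr_nonneg ρ) (integral_mollRearr ρ hm hi)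
    fun t ht => lintegral_supConv_mollRearr_le ρ ht hm

end MollifiedRearrangement

section TestFunctions

/-- Membership in `C_c^∞(Ω)`, the class of competitors in the variational problems below. -/
structure IsTestFunction {E : Type*} [NormedAddCommGroup E] [NormedSpace ℝ E] (Ω : Set E)
    (φ : E → ℝ) : Prop where
  contDiff : ContDiff ℝ (⊤ : ℕ∞) φ
  hasCompactSupport : HasCompactSupport φ
  tsupport_subset : tsupport φ ⊆ Ω

namespace IsTestFunction

variable {E : Type*} [NormedAddCommGroup E] [NormedSpace ℝ E] {Ω : Set E} {φ : E → ℝ}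

theorem continuous (h : IsTestFunction Ω φ) : Continuous φ := h.contDiff.continuous

theorem integrable_mul_sq [MeasurableSpace E] [OpensMeasurableSpace E] {μ : Measure E}
    [IsFiniteMeasureOnCompacts μ] (h : IsTestFunction Ω φ) {w : E → ℝ} (hw : Continuous w) :
    Integrable (fun x => w x * φ x ^ 2) μ := by
  refine (hw.mul (h.continuous.pow 2)).integrable_of_hasCompactSupport ?_
  exact h.hasCompactSupport.mono fun x hx => ne_zero_pow two_ne_zero (right_ne_zero_of_mul hx)

theorem integrable_sq [MeasurableSpace E] [OpensMeasurableSpace E] {μ : Measure E}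
    [IsFiniteMeasureOnCompacts μ] (h : IsTestFunction Ω φ) : Integrable (fun x => φ x ^ 2) μ := by
  simpa only [one_mul] using h.integrable_mul_sq (μ := μ) (continuous_const (y := (1 : ℝ)))

theorem integral_sq_pos [MeasurableSpace E] [OpensMeasurableSpace E] {μ : Measure E}
    [IsFiniteMeasureOnCompacts μ] [μ.IsOpenPosMeasure] (h : IsTestFunction Ω φ) (hφ : φ ≠ 0) :
    0 < ∫ x, φ x ^ 2 ∂μ := by
  obtain ⟨x, hx⟩ := Function.ne_iff.1 hφ
  exact (h.continuous.pow 2).integral_pos_of_hasCompactSupport_nonneg_nonzero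
    (h.hasCompactSupport.mono fun y hy => ne_zero_pow two_ne_zero hy) (fun y => sq_nonneg _)
    (pow_ne_zero 2 hx)

theorem exists_abs_le (h : IsTestFunction Ω φ) : ∃ M : ℝ, 0 ≤ M ∧ ∀ x, |φ x| ≤ M := by
  obtain ⟨M, hM⟩ := h.hasCompactSupport.exists_bound_of_continuous h.continuous
  exact ⟨M, (norm_nonneg _).trans (hM 0), hM⟩

end IsTestFunction

theorem exists_isTestFunction_ne_zero {E : Type*} [NormedAddCommGroup E] [NormedSpace ℝ E]
    [FiniteDimensional ℝ E] {Ω : Set E} (hΩ : IsOpen Ω) (hne : Ω.Nonempty) :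
    ∃ φ : E → ℝ, IsTestFunction Ω φ ∧ φ ≠ 0 := by
  obtain ⟨x, hx⟩ := hne
  obtain ⟨φ, hsub, hc, hφ, -, hφx⟩ := exists_contDiff_tsupport_subset (n := ⊤) (hΩ.mem_nhds hx)
  exact ⟨φ, ⟨hφ, hc, hsub⟩, Function.ne_iff.2 ⟨x, by simp [hφx]⟩⟩

end TestFunctions

section RayleighQuotients

variable {E : Type*} [NormedAddCommGroup E] [NormedSpace ℝ E] [MeasureSpace E]
  {Q : (E → ℝ) → ℝ} {Ω : Set E}

/-- The bottom of the spectrum on `Ω`, with Dirichlet boundary conditions, of the operator with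
quadratic form `Q`. It is only meaningful if the Rayleigh quotients are bounded below, as they are
for `0 ≤ Q`. -/
noncomputable def rayleighInf (Q : (E → ℝ) → ℝ) (Ω : Set E) : ℝ :=
  sInf ((fun φ => Q φ / ∫ x, φ x ^ 2) '' {φ | IsTestFunction Ω φ ∧ φ ≠ 0})

theorem rayleighInf_nonneg (hQ : ∀ φ, 0 ≤ Q φ) (Ω : Set E) : 0 ≤ rayleighInf Q Ω := by
  refine Real.sInf_nonneg ?_
  rintro _ ⟨φ, -, rfl⟩
  exact div_nonneg (hQ φ) (integral_nonneg fun x => sq_nonneg _)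

variable [OpensMeasurableSpace E] [IsFiniteMeasureOnCompacts (volume : Measure E)]
  [(volume : Measure E).IsOpenPosMeasure]

theorem rayleighInf_mul_le (hQ : ∀ φ, 0 ≤ Q φ) {φ : E → ℝ} (h : IsTestFunction Ω φ) :
    rayleighInf Q Ω * ∫ x, φ x ^ 2 ≤ Q φ := by
  rcases eq_or_ne φ 0 with rfl | hφ
  · simpa using hQ 0
  · refine (le_div_iff₀ (h.integral_sq_pos hφ)).1 (csInf_le ⟨0, ?_⟩ ⟨φ, ⟨h, hφ⟩, rfl⟩)
    rintro _ ⟨ψ, -, rfl⟩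
    exact div_nonneg (hQ ψ) (integral_nonneg fun x => sq_nonneg _)

theorem le_rayleighInf [FiniteDimensional ℝ E] (hΩ : IsOpen Ω) (hne : Ω.Nonempty) {c : ℝ}
    (hc : ∀ φ, IsTestFunction Ω φ → c * ∫ x, φ x ^ 2 ≤ Q φ) : c ≤ rayleighInf Q Ω := by
  obtain ⟨φ, hφ⟩ := exists_isTestFunction_ne_zero hΩ hne
  refine le_csInf ⟨_, φ, hφ, rfl⟩ ?_
  rintro _ ⟨ψ, ⟨hψ, hψ0⟩, rfl⟩
  exact (le_div_iff₀ (hψ.integral_sq_pos hψ0)).2 (hc ψ hψ)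

end RayleighQuotients

section GroundEnergy

variable {E : Type*} [NormedAddCommGroup E] [InnerProductSpace ℝ E] [FiniteDimensional ℝ E]
  [MeasurableSpace E] [BorelSpace E] {w : E → ℝ} {Ω : Set E} {φ : E → ℝ}

/-- The quadratic form of the Schrödinger operator `-Δ + w`. -/
noncomputable def schrodingerEnergy (w φ : E → ℝ) : ℝ :=
  ∫ x, ‖fderiv ℝ φ x‖ ^ 2 + w x * φ x ^ 2

/-- The ground state energy of `-Δ + w` on `Ω` with Dirichlet boundary conditions. -/
noncomputable abbrev groundEnergy (w : E → ℝ) (Ω : Set E) : ℝ := rayleighInf (schrodingerEnergy w) Ω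

theorem IsTestFunction.integrable_norm_fderiv_sq (h : IsTestFunction Ω φ) :
    Integrable fun x => ‖fderiv ℝ φ x‖ ^ 2 :=
  _root_.integrable_norm_fderiv_sq (contDiff_infty.1 h.contDiff 1) h.hasCompactSupport

theorem schrodingerEnergy_eq_add (hw : Continuous w) (h : IsTestFunction Ω φ) :
    schrodingerEnergy w φ = (∫ x, ‖fderiv ℝ φ x‖ ^ 2) + ∫ x, w x * φ x ^ 2 :=
  integral_add h.integrable_norm_fderiv_sq (h.integrable_mul_sq hw)

theorem schrodingerEnergy_nonneg (hw : ∀ x, 0 ≤ w x) (φ : E → ℝ) : 0 ≤ schrodingerEnergy w φ :=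
  integral_nonneg fun x => add_nonneg (sq_nonneg _) (mul_nonneg (hw x) (sq_nonneg _))

theorem schrodingerEnergy_mono {w' : E → ℝ} (hw : Continuous w) (hw' : Continuous w')
    (hle : ∀ x, w x ≤ w' x) (h : IsTestFunction Ω φ) :
    schrodingerEnergy w φ ≤ schrodingerEnergy w' φ := by
  rw [schrodingerEnergy_eq_add hw h, schrodingerEnergy_eq_add hw' h]
  refine add_le_add le_rfl
    (integral_mono (h.integrable_mul_sq hw) (h.integrable_mul_sq hw') fun x => ?_)
  exact mul_le_mul_of_nonneg_right (hle x) (sq_nonneg _)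

theorem groundEnergy_mono_weight {w' : E → ℝ} (hw : Continuous w) (hw' : Continuous w')
    (hw0 : ∀ x, 0 ≤ w x) (hle : ∀ x, w x ≤ w' x) (hΩ : IsOpen Ω) (hne : Ω.Nonempty) :
    groundEnergy w Ω ≤ groundEnergy w' Ω :=
  le_rayleighInf hΩ hne fun _ hφ =>
    (rayleighInf_mul_le (schrodingerEnergy_nonneg hw0) hφ).trans
      (schrodingerEnergy_mono hw hw' hle hφ)

end GroundEnergy

section FaberKrahn

theorem measure_lt_of_isCompact_subset_isOpen {X : Type*} [TopologicalSpace X] [T2Space X]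
    [ConnectedSpace X] [NoncompactSpace X] [MeasurableSpace X] [OpensMeasurableSpace X]
    {μ : Measure X} [IsFiniteMeasureOnCompacts μ] [μ.IsOpenPosMeasure] {K Ω : Set X}
    (hK : IsCompact K) (hΩ : IsOpen Ω) (hne : Ω.Nonempty) (hKΩ : K ⊆ Ω) : μ K < μ Ω := by
  have hdiff : (Ω \ K).Nonempty := by
    rw [nonempty_iff_ne_empty]
    intro h
    obtain rfl : K = Ω := hKΩ.antisymm (sdiff_eq_empty.1 h)
    exact hK.ne_univ (IsClopen.eq_univ ⟨hK.isClosed, hΩ⟩ hne)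
  have hpos : 0 < μ (Ω \ K) := (hΩ.sdiff hK.isClosed).measure_pos μ hdiff
  calc μ K < μ K + μ (Ω \ K) := ENNReal.lt_add_right hK.measure_lt_top.ne hpos.ne'
    _ = μ Ω := by
      rw [measure_add_sdiff hK.measurableSet.nullMeasurableSet, union_eq_self_of_subset_left hKΩ]

variable {E : Type*} [NormedAddCommGroup E] [InnerProductSpace ℝ E] [FiniteDimensional ℝ E]
  [MeasurableSpace E] [BorelSpace E]

theorem exists_contDiffBump_seq (E : Type*) [NormedAddCommGroup E] :
    ∃ ρ : ℕ → ContDiffBump (0 : E), Tendsto (fun n => (ρ n).rOut) atTop (𝓝 0) ∧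
      ∀ n, (ρ n).rOut ≤ 2 * (ρ n).rIn := by
  refine ⟨fun n => ⟨1 / (n + 1 : ℝ), 2 * (1 / (n + 1 : ℝ)), by positivity, ?_⟩, ?_, fun n => le_rfl⟩
  · exact lt_two_mul_self (by positivity)
  · simpa using (tendsto_one_div_add_atTop_nhds_zero_nat (𝕜 := ℝ)).const_mul 2

variable [Nontrivial E]

theorem tendsto_integral_mul_mollRearr_sq {ι : Type*} {l : Filter ι} [l.IsCountablyGenerated]
    {ρ : ι → ContDiffBump (0 : E)} {K : ℝ} (hρ : Tendsto (fun i => (ρ i).rOut) l (𝓝 0))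
    (hρK : ∀ᶠ i in l, (ρ i).rOut ≤ K * (ρ i).rIn) {w : E → ℝ} (hw : Continuous w) {φ : E → ℝ}
    (hφ : Measurable φ) (hφi : Integrable φ) {M : ℝ} (hM0 : 0 ≤ M) (hM : ∀ x, |φ x| ≤ M) {R : ℝ}
    (hR : volume (Function.support φ) ≤ volume (Metric.ball (0 : E) R)) :
    Tendsto (fun i => ∫ x, w x * mollRearr (ρ i) φ x ^ 2) l (𝓝 (∫ x, w x * absRearr φ x ^ 2)) := by
  refine tendsto_integral_filter_of_dominated_convergence
    ((Metric.closedBall (0 : E) (R + 1)).indicator fun x => |w x| * M ^ 2)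
    (Eventually.of_forall fun i => ?_) ?_ ?_ ?_
  · have hcont := (contDiff_mollRearr (n := 0) (ρ i) hφ hφi).continuous
    exact (hw.mul (hcont.pow 2)).aestronglyMeasurable
  · filter_upwards [hρ.eventually_lt_const one_pos] with i hi
    refine Eventually.of_forall fun x => ?_
    by_cases hx : x ∈ Metric.closedBall (0 : E) (R + 1)
    · rw [indicator_of_mem hx, norm_mul, Real.norm_eq_abs,
        Real.norm_of_nonneg (sq_nonneg _)]
      gcongr
      · exact mollRearr_nonneg _ x
      · exact mollRearr_le _ hM0 hM x
    · have hx' : R + (ρ i).rOut ≤ ‖x‖ := by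
        rw [mem_closedBall_zero_iff, not_le] at hx
        linarith
      rw [indicator_of_notMem hx, mollRearr_eq_zero _ hR hx']
      simp
  · rw [integrable_indicator_iff Metric.isClosed_closedBall.measurableSet]
    exact (hw.abs.mul continuous_const).continuousOn.integrableOn_compact (isCompact_closedBall _ _)
  · filter_upwards [ContDiffBump.ae_convolution_tendsto_right_of_locallyIntegrable hρ hρK
      (integrable_absRearr hφ hφi).locallyIntegrable] with x hx
    exact (hx.pow 2).const_mul _

theorem IsTestFunction.exists_radius_lt {Ω : Set E} (hΩ : IsOpen Ω) (hne : Ω.Nonempty) {r : ℝ}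
    (hr : 0 ≤ r) (hvol : volume Ω ≤ volume (Metric.ball (0 : E) r)) {φ : E → ℝ}
    (h : IsTestFunction Ω φ) :
    ∃ R < r, volume (Function.support φ) ≤ volume (Metric.ball (0 : E) R) := by
  obtain ⟨R, hR, hRvol⟩ := exists_volume_ball_eq (E := E)
    (h.hasCompactSupport.measure_lt_top (μ := (volume : Measure E))).ne
  refine ⟨R, ((strictMonoOn_volume_ball (E := E)).lt_iff_lt hR hr).1 ?_,
    (measure_mono (subset_tsupport φ)).trans hRvol.ge⟩
  exact hRvol.trans_lt
    ((measure_lt_of_isCompact_subset_isOpen h.hasCompactSupport hΩ hne h.tsupport_subset).trans_le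
      hvol)

/-- The Faber–Krahn inequality for radially increasing potentials. -/
theorem groundEnergy_ball_le {g : ℝ → ℝ} (hg : MonotoneOn g (Ici 0)) (hg0 : 0 ≤ g 0)
    (hgc : Continuous g) {Ω : Set E} (hΩ : IsOpen Ω) (hne : Ω.Nonempty) {r : ℝ} (hr : 0 ≤ r)
    (hvol : volume Ω ≤ volume (Metric.ball (0 : E) r)) :
    groundEnergy (fun x => g ‖x‖) (Metric.ball (0 : E) r) ≤ groundEnergy (fun x => g ‖x‖) Ω := by
  refine le_rayleighInf hΩ hne fun φ hφ => ?_
  set c := groundEnergy (fun x => g ‖x‖) (Metric.ball (0 : E) r)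
  have hw : Continuous fun x : E => g ‖x‖ := hgc.comp continuous_norm
  have hw0 (x : E) : 0 ≤ g ‖x‖ := hg0.trans (hg self_mem_Ici (norm_nonneg x) (norm_nonneg x))
  have hm : Measurable φ := hφ.continuous.measurable
  have hi : Integrable φ := hφ.continuous.integrable_of_hasCompactSupport hφ.hasCompactSupport
  obtain ⟨M, hM0, hM⟩ := hφ.exists_abs_le
  obtain ⟨R, hRr, hR⟩ := hφ.exists_radius_lt hΩ hne hr hvol
  obtain ⟨ρ, hρ, hρ2⟩ := exists_contDiffBump_seq E
  have hlim {w : E → ℝ} (hw : Continuous w) :=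
    tendsto_integral_mul_mollRearr_sq hρ (Eventually.of_forall hρ2) hw hm hi hM0 hM hR
  have hmoll : ∀ᶠ n in atTop, c * ∫ x, 1 * mollRearr (ρ n) φ x ^ 2 ≤
      (∫ x, ‖fderiv ℝ φ x‖ ^ 2) + ∫ x, g ‖x‖ * mollRearr (ρ n) φ x ^ 2 := by
    filter_upwards [hρ.eventually_lt_const (sub_pos.2 hRr)] with n hn
    have hsub := tsupport_mollRearr_subset (ρ n) hR
    have htest : IsTestFunction (Metric.ball (0 : E) r) (mollRearr (ρ n) φ) :=
      ⟨contDiff_mollRearr _ hm hi,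
        (isCompact_closedBall _ _).of_isClosed_subset isClosed_closure hsub,
        hsub.trans (Metric.closedBall_subset_ball (by linarith))⟩
    simp only [one_mul]
    refine (rayleighInf_mul_le (schrodingerEnergy_nonneg hw0) htest).trans ?_
    rw [schrodingerEnergy_eq_add hw htest]
    refine add_le_add ?_ le_rfl
    exact integral_norm_fderiv_mollRearr_sq_le _ (contDiff_infty.1 hφ.contDiff 2)
      hφ.hasCompactSupport
  have hrearr := le_of_tendsto_of_tendsto ((hlim (continuous_const (y := (1 : ℝ)))).const_mul c)
    ((hlim hw).const_add _) hmoll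
  simp only [one_mul, integral_absRearr_sq hm hM] at hrearr
  rw [schrodingerEnergy_eq_add hw hφ]
  refine hrearr.trans (add_le_add le_rfl ?_)
  exact integral_mul_absRearr_sq_le hg hg0 hm hM hφ.integrable_sq (hφ.integrable_mul_sq hw)

end FaberKrahn

namespace IsTestFunction

variable {E F : Type*} [NormedAddCommGroup E] [NormedSpace ℝ E] [NormedAddCommGroup F]
  [NormedSpace ℝ F] {Ω : Set E} {φ : E → ℝ}

theorem differentiable (h : IsTestFunction Ω φ) : Differentiable ℝ φ :=
  h.contDiff.differentiable (by simp)

theorem comp (h : IsTestFunction Ω φ) {Ω' : Set F} {T : F → E} (hT : ContDiff ℝ (⊤ : ℕ∞) T)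
    (hTc : Topology.IsClosedEmbedding T) (hTΩ : T ⁻¹' Ω ⊆ Ω') : IsTestFunction Ω' (φ ∘ T) where
  contDiff := h.contDiff.comp hT
  hasCompactSupport := h.hasCompactSupport.comp_isClosedEmbedding hTc
  tsupport_subset := (tsupport_comp_subset_preimage φ hTc.continuous).trans
    ((preimage_mono h.tsupport_subset).trans hTΩ)

variable {Ω' : Set F}

theorem slice_left {u : E × F → ℝ} (h : IsTestFunction (Ω ×ˢ Ω') u) (y : F) :
    IsTestFunction Ω fun x => u (x, y) :=
  h.comp (T := fun x => (x, y)) (contDiff_id.prodMk contDiff_const)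
    (Function.LeftInverse.isClosedEmbedding (f := Prod.fst) (fun _ => rfl) continuous_fst
      (by fun_prop)) fun _ hx => hx.1

theorem slice_right {u : E × F → ℝ} (h : IsTestFunction (Ω ×ˢ Ω') u) (x : E) :
    IsTestFunction Ω' fun y => u (x, y) :=
  h.comp (T := fun y => (x, y)) (contDiff_const.prodMk contDiff_id)
    (Function.LeftInverse.isClosedEmbedding (f := Prod.snd) (fun _ => rfl) continuous_snd
      (by fun_prop)) fun _ hy => hy.2

theorem tensor (h : IsTestFunction Ω φ) {ψ : F → ℝ} (h' : IsTestFunction Ω' ψ) :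
    IsTestFunction (Ω ×ˢ Ω') fun p => φ p.1 * ψ p.2 := by
  have hsub : tsupport (fun p : E × F => φ p.1 * ψ p.2) ⊆ tsupport φ ×ˢ tsupport ψ :=
    closure_minimal (fun p hp => ⟨subset_tsupport φ (left_ne_zero_of_mul hp),
      subset_tsupport ψ (right_ne_zero_of_mul hp)⟩)
      ((isClosed_tsupport φ).prod (isClosed_tsupport ψ))
  exact ⟨(h.contDiff.comp contDiff_fst).mul (h'.contDiff.comp contDiff_snd),
    (h.hasCompactSupport.prod h'.hasCompactSupport).of_isClosed_subset isClosed_closure hsub,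
    hsub.trans (prod_mono h.tsupport_subset h'.tsupport_subset)⟩

theorem integrable_mul_norm_fderiv_comp_sq [MeasurableSpace E] [OpensMeasurableSpace E]
    {μ : Measure E} [IsFiniteMeasureOnCompacts μ] (h : IsTestFunction Ω φ) (T : F →L[ℝ] E)
    {b : E → ℝ} (hb : Continuous b) :
    Integrable (fun x => b x * ‖(fderiv ℝ φ x).comp T‖ ^ 2) μ := by
  have hD : Continuous (fderiv ℝ φ) := h.contDiff.continuous_fderiv (by simp)
  refine (hb.mul ((hD.clm_comp continuous_const).norm.pow 2)).integrable_of_hasCompactSupport ?_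
  refine (h.hasCompactSupport.fderiv ℝ).mono fun x hx h0 => hx ?_
  simp [h0]

end IsTestFunction

section GrushinEnergy

variable {E F : Type*} [NormedAddCommGroup E] [NormedSpace ℝ E] [NormedAddCommGroup F]
  [NormedSpace ℝ F]

theorem fderiv_slice_left {u : E × F → ℝ} {p : E × F} (h : DifferentiableAt ℝ u p) :
    fderiv ℝ (fun x => u (x, p.2)) p.1 = (fderiv ℝ u p).comp (ContinuousLinearMap.inl ℝ E F) :=
  (HasFDerivAt.comp p.1 h.hasFDerivAt (hasFDerivAt_prodMk_left p.1 p.2)).fderiv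

theorem fderiv_slice_right {u : E × F → ℝ} {p : E × F} (h : DifferentiableAt ℝ u p) :
    fderiv ℝ (fun y => u (p.1, y)) p.2 = (fderiv ℝ u p).comp (ContinuousLinearMap.inr ℝ E F) :=
  (HasFDerivAt.comp p.2 h.hasFDerivAt (hasFDerivAt_prodMk_right p.1 p.2)).fderiv

/-- The quadratic form of the Grushin-type operator `-Δ_x - a(x) Δ_y` on functions of `(x, y)`. -/
noncomputable def grushinEnergy [MeasureSpace E] [MeasureSpace F] (a : E → ℝ)
    (u : E × F → ℝ) : ℝ :=
  ∫ p : E × F, ‖fderiv ℝ (fun x => u (x, p.2)) p.1‖ ^ 2 +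
    a p.1 * ‖fderiv ℝ (fun y => u (p.1, y)) p.2‖ ^ 2

theorem grushinEnergy_nonneg [MeasureSpace E] [MeasureSpace F] {a : E → ℝ} (ha : ∀ x, 0 ≤ a x)
    (u : E × F → ℝ) : 0 ≤ grushinEnergy a u :=
  integral_nonneg fun _ => add_nonneg (sq_nonneg _) (mul_nonneg (ha _) (sq_nonneg _))

namespace IsTestFunction

variable [MeasurableSpace (E × F)] [OpensMeasurableSpace (E × F)] {μ : Measure (E × F)}
  [IsFiniteMeasureOnCompacts μ] {Ω : Set (E × F)} {u : E × F → ℝ}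

theorem integrable_norm_fderiv_slice_left_sq (h : IsTestFunction Ω u) :
    Integrable (fun p : E × F => ‖fderiv ℝ (fun x => u (x, p.2)) p.1‖ ^ 2) μ := by
  simpa only [one_mul, fderiv_slice_left (h.differentiable _)] using
    h.integrable_mul_norm_fderiv_comp_sq (μ := μ) (ContinuousLinearMap.inl ℝ E F)
      (continuous_const (y := (1 : ℝ)))

theorem integrable_mul_norm_fderiv_slice_right_sq (h : IsTestFunction Ω u) {a : E → ℝ}
    (ha : Continuous a) :
    Integrable (fun p : E × F => a p.1 * ‖fderiv ℝ (fun y => u (p.1, y)) p.2‖ ^ 2) μ := by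
  simpa only [fderiv_slice_right (h.differentiable _)] using
    h.integrable_mul_norm_fderiv_comp_sq (μ := μ) (ContinuousLinearMap.inr ℝ E F)
      (b := fun p => a p.1) (by fun_prop)

end IsTestFunction

end GrushinEnergy

section Separation

variable {E F : Type*} [NormedAddCommGroup E] [InnerProductSpace ℝ E] [FiniteDimensional ℝ E]
  [MeasurableSpace E] [BorelSpace E] [NormedAddCommGroup F] [InnerProductSpace ℝ F]
  [FiniteDimensional ℝ F] [MeasurableSpace F] [BorelSpace F]
  {Ω : Set E} {Ω' : Set F} {a : E → ℝ} {u : E × F → ℝ}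

theorem groundEnergy_zero_mul_integral_le (ha : Continuous a) (ha0 : ∀ x, 0 ≤ a x)
    (hu : IsTestFunction (Ω ×ˢ Ω') u) :
    groundEnergy 0 Ω' * ∫ p, a p.1 * u p ^ 2 ≤
      ∫ p : E × F, a p.1 * ‖fderiv ℝ (fun y => u (p.1, y)) p.2‖ ^ 2 := by
  have hmass := hu.integrable_mul_sq (μ := volume) (w := fun p => a p.1) (by fun_prop)
  have hgrad := hu.integrable_mul_norm_fderiv_slice_right_sq (μ := volume) ha
  rw [Measure.volume_eq_prod] at hmass hgrad ⊢
  rw [integral_prod _ hmass, integral_prod _ hgrad, ← integral_const_mul]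
  refine integral_mono (hmass.integral_prod_left.const_mul _) hgrad.integral_prod_left fun x => ?_
  have hslice := rayleighInf_mul_le (schrodingerEnergy_nonneg fun _ => le_rfl) (hu.slice_right x)
  simp only [schrodingerEnergy, zero_mul, add_zero] at hslice
  simp only [integral_const_mul, mul_left_comm _ (a x)]
  exact mul_le_mul_of_nonneg_left hslice (ha0 x)

theorem groundEnergy_mul_le_grushinEnergy (ha : Continuous a) (ha0 : ∀ x, 0 ≤ a x)
    (hu : IsTestFunction (Ω ×ˢ Ω') u) :
    groundEnergy (fun x => groundEnergy 0 Ω' * a x) Ω * ∫ p, u p ^ 2 ≤ grushinEnergy a u := by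
  set e := groundEnergy 0 Ω'
  have : Continuous fun x => e * a x := continuous_const.mul ha
  have hw0 (x : E) : 0 ≤ e * a x :=
    mul_nonneg (rayleighInf_nonneg (schrodingerEnergy_nonneg fun _ => le_rfl) Ω') (ha0 x)
  have hmass := hu.integrable_sq (μ := volume)
  have hpot := hu.integrable_mul_sq (μ := volume) (w := fun p => e * a p.1) (by fun_prop)
  have hgrad := hu.integrable_norm_fderiv_slice_left_sq (μ := volume)
  calc groundEnergy (fun x => e * a x) Ω * ∫ p, u p ^ 2
      ≤ ∫ p : E × F, ‖fderiv ℝ (fun x => u (x, p.2)) p.1‖ ^ 2 + e * a p.1 * u p ^ 2 := by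
        have henergy : Integrable fun p : E × F =>
            ‖fderiv ℝ (fun x => u (x, p.2)) p.1‖ ^ 2 + e * a p.1 * u p ^ 2 := hgrad.add hpot
        rw [Measure.volume_eq_prod] at hmass henergy ⊢
        rw [integral_prod_symm _ hmass, integral_prod_symm _ henergy, ← integral_const_mul]
        exact integral_mono (hmass.integral_prod_right.const_mul _) henergy.integral_prod_right
          fun y => rayleighInf_mul_le (schrodingerEnergy_nonneg hw0) (hu.slice_left y)
    _ = (∫ p : E × F, ‖fderiv ℝ (fun x => u (x, p.2)) p.1‖ ^ 2) + e * ∫ p, a p.1 * u p ^ 2 := by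
        rw [integral_add hgrad hpot]
        simp only [mul_assoc, integral_const_mul]
    _ ≤ (∫ p : E × F, ‖fderiv ℝ (fun x => u (x, p.2)) p.1‖ ^ 2) +
          ∫ p : E × F, a p.1 * ‖fderiv ℝ (fun y => u (p.1, y)) p.2‖ ^ 2 := by
        gcongr
        exact groundEnergy_zero_mul_integral_le ha ha0 hu
    _ = grushinEnergy a u :=
        (integral_add hgrad (hu.integrable_mul_norm_fderiv_slice_right_sq ha)).symm

theorem grushinEnergy_tensor (ha : Continuous a) {φ : E → ℝ} (hφ : IsTestFunction Ω φ) {ψ : F → ℝ}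
    (hψ : IsTestFunction Ω' ψ) :
    grushinEnergy a (fun p => φ p.1 * ψ p.2) =
      (∫ x, ‖fderiv ℝ φ x‖ ^ 2) * (∫ y, ψ y ^ 2) +
        (∫ x, a x * φ x ^ 2) * ∫ y, ‖fderiv ℝ ψ y‖ ^ 2 := by
  have hu := hφ.tensor hψ
  have hleft (p : E × F) : ‖fderiv ℝ (fun x => φ x * ψ p.2) p.1‖ ^ 2 =
      ‖fderiv ℝ φ p.1‖ ^ 2 * ψ p.2 ^ 2 := by
    rw [fderiv_mul_const (hφ.differentiable _), norm_smul, mul_pow,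
      Real.norm_eq_abs, sq_abs, mul_comm]
  have hright (p : E × F) : a p.1 * ‖fderiv ℝ (fun y => φ p.1 * ψ y) p.2‖ ^ 2 =
      (a p.1 * φ p.1 ^ 2) * ‖fderiv ℝ ψ p.2‖ ^ 2 := by
    rw [fderiv_const_mul (hψ.differentiable _), norm_smul, mul_pow,
      Real.norm_eq_abs, sq_abs, mul_assoc]
  rw [grushinEnergy, integral_add hu.integrable_norm_fderiv_slice_left_sq
    (hu.integrable_mul_norm_fderiv_slice_right_sq ha)]
  simp only [hleft, hright]
  exact congrArg₂ _ (integral_prod_mul (fun x => ‖fderiv ℝ φ x‖ ^ 2) fun y => ψ y ^ 2)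
    (integral_prod_mul (fun x => a x * φ x ^ 2) fun y => ‖fderiv ℝ ψ y‖ ^ 2)

theorem le_groundEnergy_of_le_grushinEnergy (ha : Continuous a) (ha0 : ∀ x, 0 ≤ a x)
    (hΩ : IsOpen Ω) (hne : Ω.Nonempty) (hΩ' : IsOpen Ω') (hne' : Ω'.Nonempty) {c : ℝ}
    (hc : ∀ u, IsTestFunction (Ω ×ˢ Ω') u → c * ∫ p, u p ^ 2 ≤ grushinEnergy a u) :
    c ≤ groundEnergy (fun x => groundEnergy 0 Ω' * a x) Ω := by
  refine le_rayleighInf hΩ hne fun φ hφ => ?_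
  set e := groundEnergy 0 Ω'
  set m := ∫ x, a x * φ x ^ 2 with hm
  have hm0 : 0 ≤ m := integral_nonneg fun x => mul_nonneg (ha0 x) (sq_nonneg _)
  have htensor {ψ : F → ℝ} (hψ : IsTestFunction Ω' ψ) :
      (c * (∫ x, φ x ^ 2) - ∫ x, ‖fderiv ℝ φ x‖ ^ 2) * ∫ y, ψ y ^ 2 ≤
        m * ∫ y, ‖fderiv ℝ ψ y‖ ^ 2 := by
    have hcu := hc _ (hφ.tensor hψ)
    rw [grushinEnergy_tensor ha hφ hψ] at hcu
    have hmass : ∫ p : E × F, (φ p.1 * ψ p.2) ^ 2 = (∫ x, φ x ^ 2) * ∫ y, ψ y ^ 2 := by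
      simp only [mul_pow]
      exact integral_prod_mul (fun x => φ x ^ 2) fun y => ψ y ^ 2
    rw [hmass] at hcu
    linarith
  have hbound : c * (∫ x, φ x ^ 2) - ∫ x, ‖fderiv ℝ φ x‖ ^ 2 ≤ e * m := by
    rcases hm0.eq_or_lt with hm0 | hm0
    · obtain ⟨ψ, hψ, hψ0⟩ := exists_isTestFunction_ne_zero hΩ' hne'
      have := htensor hψ
      rw [← hm0, zero_mul] at this
      rw [← hm0, mul_zero]
      exact nonpos_of_mul_nonpos_left this (hψ.integral_sq_pos hψ0)
    · refine (div_le_iff₀ hm0).1 (le_rayleighInf hΩ' hne' fun ψ hψ => ?_)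
      simp only [schrodingerEnergy, Pi.zero_apply, zero_mul, add_zero]
      rw [div_mul_eq_mul_div, div_le_iff₀' hm0]
      exact htensor hψ
  have hpot : ∫ x, e * a x * φ x ^ 2 = e * m := by
    simp only [hm, mul_assoc, integral_const_mul]
  rw [schrodingerEnergy_eq_add (w := fun x => e * a x) (by fun_prop) hφ, hpot]
  linarith

theorem rayleighInf_grushinEnergy_prod (ha : Continuous a) (ha0 : ∀ x, 0 ≤ a x) (hΩ : IsOpen Ω)
    (hne : Ω.Nonempty) (hΩ' : IsOpen Ω') (hne' : Ω'.Nonempty) :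
    rayleighInf (grushinEnergy a) (Ω ×ˢ Ω') =
      groundEnergy (fun x => groundEnergy 0 Ω' * a x) Ω :=
  le_antisymm
    (le_groundEnergy_of_le_grushinEnergy ha ha0 hΩ hne hΩ' hne' fun _ hu =>
      rayleighInf_mul_le (grushinEnergy_nonneg ha0) hu)
    (le_rayleighInf (hΩ.prod hΩ') (hne.prod hne') fun _ hu =>
      groundEnergy_mul_le_grushinEnergy ha ha0 hu)

end Separation

theorem grushinLambda1_eq_rayleighInf (d₁ d₂ : ℕ) (s : ℝ)
    (Ω : Set (EuclideanSpace ℝ (Fin d₁) × EuclideanSpace ℝ (Fin d₂))) :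
    grushinLambda1 d₁ d₂ s Ω = rayleighInf (grushinEnergy fun x => ‖x‖ ^ (2 * s)) Ω := by
  have hnorm {d : ℕ} (f : EuclideanSpace ℝ (Fin d) → ℝ) (x : EuclideanSpace ℝ (Fin d)) :
      ‖gradient f x‖ = ‖fderiv ℝ f x‖ := LinearIsometryEquiv.norm_map _ _
  have hquot {u} (hu : IsTestFunction Ω u) :
      (∫ p in Ω, (‖gradient (fun x => u (x, p.2)) p.1‖ ^ 2
          + ‖p.1‖ ^ (2 * s) * ‖gradient (fun y => u (p.1, y)) p.2‖ ^ 2)) / (∫ p in Ω, u p ^ 2) =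
        grushinEnergy (fun x => ‖x‖ ^ (2 * s)) u / ∫ p, u p ^ 2 := by
    have hout {p} (hp : p ∉ Ω) : p ∉ tsupport u := fun h => hp (hu.tsupport_subset h)
    rw [setIntegral_eq_integral_of_forall_compl_eq_zero fun p hp => ?_,
      setIntegral_eq_integral_of_forall_compl_eq_zero fun p hp => ?_]
    · simp only [hnorm, grushinEnergy]
    · rw [image_eq_zero_of_notMem_tsupport (hout hp), zero_pow two_ne_zero]
    · rw [hnorm, hnorm, fderiv_slice_left (hu.differentiable p),
        fderiv_slice_right (hu.differentiable p), fderiv_of_notMem_tsupport ℝ (hout hp)]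
      simp
  refine congrArg sInf (ext fun q => ⟨?_, ?_⟩)
  · rintro ⟨u, hu, huc, hsub, hu0, rfl⟩
    exact ⟨u, ⟨⟨hu, huc, hsub⟩, hu0⟩, (hquot ⟨hu, huc, hsub⟩).symm⟩
  · rintro ⟨u, ⟨hu, hu0⟩, rfl⟩
    exact ⟨u, hu.contDiff, hu.hasCompactSupport, hu.tsupport_subset, hu0, (hquot hu).symm⟩

section Scaling

theorem IsTestFunction.comp_inv_smul {E : Type*} [NormedAddCommGroup E] [NormedSpace ℝ E]
    {Ω : Set E} {φ : E → ℝ} {r : ℝ} (h : IsTestFunction Ω φ) (hr : r ≠ 0) :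
    IsTestFunction (r • Ω) fun x => φ (r⁻¹ • x) :=
  h.comp (contDiff_const_smul r⁻¹)
    (Homeomorph.smulOfNeZero r⁻¹ (inv_ne_zero hr)).isClosedEmbedding
    fun _ hx => (mem_smul_set_iff_inv_smul_mem₀ hr _ _).2 hx

variable {E : Type*} [NormedAddCommGroup E] [InnerProductSpace ℝ E] [FiniteDimensional ℝ E]
  [MeasurableSpace E] [BorelSpace E] {w : E → ℝ} {Ω : Set E} {r : ℝ}

theorem schrodingerEnergy_comp_inv_smul (hr : r ≠ 0) (w φ : E → ℝ) :
    r ^ 2 * schrodingerEnergy w (fun x => φ (r⁻¹ • x)) =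
      |r ^ Module.finrank ℝ E| * schrodingerEnergy (fun y => r ^ 2 * w (r • y)) φ := by
  rw [schrodingerEnergy, schrodingerEnergy, ← smul_eq_mul |_|,
    ← Measure.integral_comp_inv_smul volume, ← integral_const_mul]
  congr 1 with x
  rw [fderiv_comp_smul, norm_smul, smul_inv_smul₀ hr, mul_pow, Real.norm_eq_abs, sq_abs]
  field_simp

theorem sq_mul_groundEnergy_smul_le (hw : ∀ x, 0 ≤ w x) (hΩ : IsOpen Ω) (hne : Ω.Nonempty)
    (hr : r ≠ 0) :
    r ^ 2 * groundEnergy w (r • Ω) ≤ groundEnergy (fun y => r ^ 2 * w (r • y)) Ω := by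
  refine le_rayleighInf hΩ hne fun φ hφ => ?_
  have hc : 0 < |r ^ Module.finrank ℝ E| := abs_pos.2 (pow_ne_zero _ hr)
  have hmass : ∫ x, φ (r⁻¹ • x) ^ 2 = |r ^ Module.finrank ℝ E| * ∫ x, φ x ^ 2 :=
    Measure.integral_comp_inv_smul volume (fun x => φ x ^ 2) r
  have h := rayleighInf_mul_le (schrodingerEnergy_nonneg hw) (hφ.comp_inv_smul hr)
  rw [hmass] at h
  refine le_of_mul_le_mul_left ?_ hc
  rw [← schrodingerEnergy_comp_inv_smul hr]
  linarith [mul_le_mul_of_nonneg_left h (sq_nonneg r)]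

theorem groundEnergy_smul (hw : ∀ x, 0 ≤ w x) (hΩ : IsOpen Ω) (hne : Ω.Nonempty) (hr : r ≠ 0) :
    groundEnergy w (r • Ω) = (r ^ 2)⁻¹ * groundEnergy (fun y => r ^ 2 * w (r • y)) Ω := by
  have hr2 : 0 < r ^ 2 := by positivity
  refine le_antisymm ?_ ?_
  · exact (le_inv_mul_iff₀ hr2).2 (sq_mul_groundEnergy_smul_le hw hΩ hne hr)
  · have h := sq_mul_groundEnergy_smul_le (w := fun y => r ^ 2 * w (r • y))
      (fun y => mul_nonneg hr2.le (hw _)) (hΩ.smul₀ hr) (hne.smul_set) (inv_ne_zero hr)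
    simpa only [inv_smul_smul₀ hr, smul_inv_smul₀ hr, inv_pow, inv_mul_cancel_left₀ hr2.ne'] using h

theorem groundEnergy_ball (hw : ∀ x, 0 ≤ w x) (hr : 0 < r) :
    groundEnergy w (Metric.ball 0 r) =
      (r ^ 2)⁻¹ * groundEnergy (fun y => r ^ 2 * w (r • y)) (Metric.ball 0 1) := by
  rw [← smul_unitBall_of_pos hr]
  exact groundEnergy_smul hw Metric.isOpen_ball (Metric.nonempty_ball.2 one_pos) hr.ne'

theorem groundEnergy_zero_ball (hr : 0 < r) :
    groundEnergy 0 (Metric.ball (0 : E) r) =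
      (r ^ 2)⁻¹ * groundEnergy 0 (Metric.ball (0 : E) 1) := by
  have h := groundEnergy_ball (w := fun _ : E => 0) (fun _ => le_rfl) hr
  simp only [mul_zero] at h
  exact h

end Scaling

section Coupling

variable {E : Type*} [NormedAddCommGroup E] [InnerProductSpace ℝ E] [FiniteDimensional ℝ E]
  [MeasurableSpace E] [BorelSpace E] {w : E → ℝ} {Ω : Set E}

theorem concaveOn_groundEnergy_mul (hw : Continuous w) (hw0 : ∀ x, 0 ≤ w x) (hΩ : IsOpen Ω)
    (hne : Ω.Nonempty) : ConcaveOn ℝ (Ici 0) fun μ : ℝ => groundEnergy (fun x => μ * w x) Ω := by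
  have hle {μ : ℝ} (hμ : 0 ≤ μ) {φ} (hφ : IsTestFunction Ω φ) :
      groundEnergy (fun x => μ * w x) Ω * ∫ x, φ x ^ 2 ≤
        (∫ x, ‖fderiv ℝ φ x‖ ^ 2) + μ * ∫ x, w x * φ x ^ 2 := by
    refine (rayleighInf_mul_le
      (schrodingerEnergy_nonneg fun x => mul_nonneg hμ (hw0 x)) hφ).trans_eq ?_
    rw [schrodingerEnergy_eq_add (w := fun x => μ * w x) (by fun_prop) hφ]
    simp only [mul_assoc, integral_const_mul]
  refine ⟨convex_Ici 0, fun μ hμ ν hν a b ha hb hab => le_rayleighInf hΩ hne fun φ hφ => ?_⟩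
  rw [schrodingerEnergy_eq_add (w := fun x => (a • μ + b • ν) * w x) (by fun_prop) hφ]
  simp only [mul_assoc, integral_const_mul, smul_eq_mul]
  obtain rfl : b = 1 - a := by linarith
  linarith [mul_le_mul_of_nonneg_left (hle hμ hφ) ha, mul_le_mul_of_nonneg_left (hle hν hφ) hb]

theorem continuousOn_groundEnergy_mul (hw : Continuous w) (hw0 : ∀ x, 0 ≤ w x) (hΩ : IsOpen Ω)
    (hne : Ω.Nonempty) :
    ContinuousOn (fun μ : ℝ => groundEnergy (fun x => μ * w x) Ω) (Ioi 0) := by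
  simpa only [interior_Ici] using (concaveOn_groundEnergy_mul hw hw0 hΩ hne).continuousOn_interior

end Coupling

section Coercivity

variable {E : Type*} [NormedAddCommGroup E] [InnerProductSpace ℝ E] [FiniteDimensional ℝ E]
  [MeasurableSpace E] [BorelSpace E] {w : E → ℝ} {Ω : Set E} {φ : E → ℝ} {κ K r : ℝ} {v : E}

theorem IsTestFunction.integrable_mul_mul_fderiv (h : IsTestFunction Ω φ) {b : E → ℝ}
    (hb : Continuous b) (v : E) :
    Integrable fun x => b x * (2 * φ x * fderiv ℝ φ x v) := by
  have hφ := h.continuous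
  have hD : Continuous fun x => fderiv ℝ φ x v :=
    (h.contDiff.continuous_fderiv (by simp)).clm_apply continuous_const
  refine Continuous.integrable_of_hasCompactSupport (by fun_prop) ?_
  exact h.hasCompactSupport.mono fun x hx h0 => hx (by simp [h0])

theorem IsTestFunction.mul_integral_cos_mul_sq_eq (h : IsTestFunction Ω φ) (hv : ‖v‖ = 1) (κ : ℝ) :
    κ * ∫ x, Real.cos (κ * inner ℝ v x) * φ x ^ 2 =
      -∫ x, Real.sin (κ * inner ℝ v x) * (2 * φ x * fderiv ℝ φ x v) := by
  have hsin (x : E) : HasFDerivAt (fun x => Real.sin (κ * inner ℝ v x))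
      (Real.cos (κ * inner ℝ v x) • κ • innerSL ℝ v) x :=
    ((innerSL ℝ v).hasFDerivAt.const_mul κ).sin
  have hsq (x : E) : HasFDerivAt (fun x => φ x ^ 2) ((2 * φ x) • fderiv ℝ φ x) x := by
    simpa using (h.differentiable x).hasFDerivAt.pow 2
  have hcos_v (x : E) : (Real.cos (κ * inner ℝ v x) • κ • innerSL ℝ v) v =
      κ * Real.cos (κ * inner ℝ v x) := by
    simp [hv, mul_comm]
  have hibp := integral_mul_fderiv_eq_neg_fderiv_mul_of_integrable (μ := (volume : Measure E))
    (f := fun x => Real.sin (κ * inner ℝ v x)) (g := fun x => φ x ^ 2) (v := v) ?_ ?_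
    (h.integrable_mul_sq (by fun_prop)) (fun x _ => (hsin x).differentiableAt)
    fun x _ => (hsq x).differentiableAt
  · simp only [(hsin _).fderiv, (hsq _).fderiv, hcos_v] at hibp
    simp only [smul_apply, smul_eq_mul, mul_assoc, integral_const_mul] at hibp ⊢
    exact (neg_eq_iff_eq_neg.2 hibp).symm
  · simp only [(hsin _).fderiv, hcos_v]
    exact h.integrable_mul_sq (by fun_prop)
  · simp only [(hsq _).fderiv]
    exact h.integrable_mul_mul_fderiv (b := fun x => Real.sin (κ * inner ℝ v x)) (by fun_prop) v

theorem IsTestFunction.integral_cos_mul_sq_le (h : IsTestFunction Ω φ) (hv : ‖v‖ = 1)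
    (hκ : 0 < κ) :
    ∫ x, Real.cos (κ * inner ℝ v x) * φ x ^ 2 ≤
      1 / 4 * (∫ x, φ x ^ 2) + 4 / κ ^ 2 * ∫ x, ‖fderiv ℝ φ x‖ ^ 2 := by
  have hpt (x : E) : -(Real.sin (κ * inner ℝ v x) * (2 * φ x * fderiv ℝ φ x v)) ≤
      κ / 4 * φ x ^ 2 + 4 / κ * ‖fderiv ℝ φ x‖ ^ 2 := by
    have hDv : |fderiv ℝ φ x v| ≤ ‖fderiv ℝ φ x‖ := by
      simpa [hv] using (fderiv ℝ φ x).le_opNorm v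
    calc -(Real.sin (κ * inner ℝ v x) * (2 * φ x * fderiv ℝ φ x v))
        ≤ |Real.sin (κ * inner ℝ v x)| * (2 * |φ x| * |fderiv ℝ φ x v|) := by
          refine (neg_le_abs _).trans_eq ?_
          rw [abs_mul, abs_mul, abs_mul, abs_two]
      _ ≤ 1 * (2 * |φ x| * ‖fderiv ℝ φ x‖) := by
          gcongr
          exact Real.abs_sin_le_one _
      _ ≤ κ / 4 * φ x ^ 2 + 4 / κ * ‖fderiv ℝ φ x‖ ^ 2 := by
          have hsq : 0 ≤ (κ * |φ x| - 4 * ‖fderiv ℝ φ x‖) ^ 2 / (4 * κ) := by positivity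
          have hexp : (κ * |φ x| - 4 * ‖fderiv ℝ φ x‖) ^ 2 / (4 * κ) =
              κ / 4 * |φ x| ^ 2 + 4 / κ * ‖fderiv ℝ φ x‖ ^ 2 - 2 * |φ x| * ‖fderiv ℝ φ x‖ := by
            field_simp
            ring
          rw [← sq_abs (φ x)]
          linarith
  have hmass := (h.integrable_sq (μ := volume)).const_mul (κ / 4)
  have hgrad := h.integrable_norm_fderiv_sq.const_mul (4 / κ)
  refine le_of_mul_le_mul_left ?_ hκ
  calc κ * ∫ x, Real.cos (κ * inner ℝ v x) * φ x ^ 2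
      = ∫ x, -(Real.sin (κ * inner ℝ v x) * (2 * φ x * fderiv ℝ φ x v)) := by
        rw [h.mul_integral_cos_mul_sq_eq hv, integral_neg]
    _ ≤ ∫ x, κ / 4 * φ x ^ 2 + 4 / κ * ‖fderiv ℝ φ x‖ ^ 2 :=
        integral_mono (h.integrable_mul_mul_fderiv (by fun_prop) v).neg (hmass.add hgrad) hpt
    _ = κ * (1 / 4 * (∫ x, φ x ^ 2) + 4 / κ ^ 2 * ∫ x, ‖fderiv ℝ φ x‖ ^ 2) := by
        rw [integral_add hmass hgrad, integral_const_mul, integral_const_mul]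
        field_simp

theorem half_le_cos_mul_inner {E : Type*} [NormedAddCommGroup E] [InnerProductSpace ℝ E] {v x : E}
    {κ : ℝ} (hv : ‖v‖ = 1) (hκ : 0 ≤ κ) (hx : κ * ‖x‖ ≤ 1) :
    1 / 2 ≤ Real.cos (κ * inner ℝ v x) := by
  have hinner : |inner ℝ v x| ≤ ‖x‖ := by simpa [hv] using abs_real_inner_le_norm v x
  have habs : |κ * inner ℝ v x| ≤ 1 := by
    rw [abs_mul, abs_of_nonneg hκ]
    exact (mul_le_mul_of_nonneg_left hinner hκ).trans hx
  linarith [(sq_le_one_iff_abs_le_one _).2 habs,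
    Real.one_sub_sq_div_two_le_cos (x := κ * inner ℝ v x)]

theorem sq_le_groundEnergy [Nontrivial E] (hw : Continuous w) (hw0 : ∀ x, 0 ≤ w x)
    (hΩ : IsOpen Ω) (hne : Ω.Nonempty) (hK : 0 < K)
    (hfar : ∀ x ∈ Ω, 1 ≤ 4 * K * ‖x‖ → 6 * K ^ 2 ≤ w x) : K ^ 2 ≤ groundEnergy w Ω := by
  obtain ⟨v, hv⟩ := exists_norm_eq E zero_le_one
  refine le_rayleighInf hΩ hne fun φ hφ => ?_
  have hpt (x : E) : φ x ^ 2 ≤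
      2 * (Real.cos (4 * K * inner ℝ v x) * φ x ^ 2) + 1 / (2 * K ^ 2) * (w x * φ x ^ 2) := by
    by_cases hxΩ : x ∈ Ω
    · have hle : 1 ≤ 2 * Real.cos (4 * K * inner ℝ v x) + 1 / (2 * K ^ 2) * w x := by
        rcases lt_or_ge (4 * K * ‖x‖) 1 with hx | hx
        · have : 0 ≤ 1 / (2 * K ^ 2) * w x := mul_nonneg (by positivity) (hw0 x)
          linarith [half_le_cos_mul_inner hv (by positivity) hx.le]
        · have : 3 ≤ 1 / (2 * K ^ 2) * w x := by
            rw [div_mul_eq_mul_div, le_div_iff₀ (by positivity)]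
            linarith [hfar x hxΩ hx]
          linarith [Real.neg_one_le_cos (4 * K * inner ℝ v x)]
      linarith [mul_le_mul_of_nonneg_right hle (sq_nonneg (φ x))]
    · rw [image_eq_zero_of_notMem_tsupport fun h => hxΩ (hφ.tsupport_subset h)]
      simp
  have hcosint := (hφ.integrable_mul_sq (μ := volume)
    (w := fun x => Real.cos (4 * K * inner ℝ v x)) (by fun_prop)).const_mul 2
  have hpot := (hφ.integrable_mul_sq (μ := volume) hw).const_mul (1 / (2 * K ^ 2))
  have hmass : ∫ x, φ x ^ 2 ≤ 2 * (∫ x, Real.cos (4 * K * inner ℝ v x) * φ x ^ 2) +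
      1 / (2 * K ^ 2) * ∫ x, w x * φ x ^ 2 := by
    rw [← integral_const_mul, ← integral_const_mul, ← integral_add hcosint hpot]
    exact integral_mono hφ.integrable_sq (hcosint.add hpot) hpt
  have hosc := hφ.integral_cos_mul_sq_le hv (by positivity : 0 < 4 * K)
  rw [schrodingerEnergy_eq_add hw hφ]
  field_simp at hmass hosc ⊢
  linarith

theorem groundEnergy_zero_ball_pos [Nontrivial E] (hr : 0 < r) :
    0 < groundEnergy 0 (Metric.ball (0 : E) r) := by
  refine (sq_pos_of_pos (by positivity : 0 < (4 * r)⁻¹)).trans_le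
    (sq_le_groundEnergy continuous_zero (fun _ => le_rfl) Metric.isOpen_ball
      (Metric.nonempty_ball.2 hr) (by positivity) fun x hx hx' => absurd hx' (not_le.2 ?_))
  rw [mem_ball_zero_iff] at hx
  field_simp
  exact hx

end Coercivity

section ProductsOfBalls

variable {E F : Type*} [NormedAddCommGroup E] [InnerProductSpace ℝ E] [FiniteDimensional ℝ E]
  [MeasurableSpace E] [BorelSpace E] [NormedAddCommGroup F] [InnerProductSpace ℝ F]
  [FiniteDimensional ℝ F] [MeasurableSpace F] [BorelSpace F] {p : ℝ}

theorem continuousOn_groundEnergy_mul_norm_rpow_ball (hp : 0 ≤ p) {e : ℝ → ℝ}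
    (hec : ContinuousOn e (Ioi 0)) (he0 : ∀ r, 0 < r → 0 < e r) :
    ContinuousOn (fun r => groundEnergy (fun x : E => e r * ‖x‖ ^ p) (Metric.ball 0 r))
      (Ioi 0) := by
  set G : ℝ → ℝ := fun μ => groundEnergy (fun x : E => μ * ‖x‖ ^ p) (Metric.ball 0 1)
  have hG : ContinuousOn G (Ioi 0) := continuousOn_groundEnergy_mul
    (continuous_norm.rpow_const fun _ => Or.inr hp) (fun x => by positivity) Metric.isOpen_ball
    (Metric.nonempty_ball.2 one_pos)
  have hscale {r : ℝ} (hr : 0 < r) :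
      groundEnergy (fun x : E => e r * ‖x‖ ^ p) (Metric.ball 0 r) =
        (r ^ 2)⁻¹ * G (r ^ 2 * e r * r ^ p) := by
    rw [groundEnergy_ball (fun x => mul_nonneg (he0 r hr).le (by positivity)) hr]
    simp only [G, norm_smul, Real.norm_eq_abs, abs_of_pos hr,
      Real.mul_rpow hr.le (norm_nonneg _), mul_assoc]
  have : Continuous fun r : ℝ => r ^ p := Real.continuous_rpow_const hp
  have hcoupling : ContinuousOn (fun r => r ^ 2 * e r * r ^ p) (Ioi 0) := by fun_prop
  have hinv : ContinuousOn (fun r : ℝ => (r ^ 2)⁻¹) (Ioi 0) :=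
    (continuousOn_pow 2).inv₀ fun r hr => pow_ne_zero 2 (ne_of_gt hr)
  refine (hinv.mul (hG.comp hcoupling fun r hr => ?_)).congr fun r hr => hscale hr
  exact mul_pos (mul_pos (pow_pos hr 2) (he0 r hr)) (Real.rpow_pos_of_pos hr p)

variable [Nontrivial E] [Nontrivial F]

theorem rayleighInf_grushinEnergy_ball_prod_ball_le {g : ℝ → ℝ} (hg : MonotoneOn g (Ici 0))
    (hg0 : 0 ≤ g 0) (hgc : Continuous g) {Ω : Set E} {Ω' : Set F} (hΩ : IsOpen Ω)
    (hΩ' : IsOpen Ω') {r r' : ℝ} (hr : 0 < r) (hr' : 0 < r')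
    (hvol : volume Ω = volume (Metric.ball (0 : E) r))
    (hvol' : volume Ω' = volume (Metric.ball (0 : F) r')) :
    rayleighInf (grushinEnergy fun x => g ‖x‖) (Metric.ball (0 : E) r ×ˢ Metric.ball (0 : F) r') ≤
      rayleighInf (grushinEnergy fun x => g ‖x‖) (Ω ×ˢ Ω') := by
  have hne : Ω.Nonempty := nonempty_of_measure_ne_zero
    (hvol ▸ (Metric.measure_ball_pos volume _ hr).ne')
  have hne' : Ω'.Nonempty := nonempty_of_measure_ne_zero
    (hvol' ▸ (Metric.measure_ball_pos volume _ hr').ne')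
  have ha : Continuous fun x : E => g ‖x‖ := by fun_prop
  have hg0' {t : ℝ} (ht : 0 ≤ t) : 0 ≤ g t := hg0.trans (hg self_mem_Ici ht ht)
  have hE (Ω : Set F) : 0 ≤ groundEnergy 0 Ω :=
    rayleighInf_nonneg (schrodingerEnergy_nonneg fun _ => le_rfl) Ω
  have hFK : groundEnergy 0 (Metric.ball (0 : F) r') ≤ groundEnergy 0 Ω' :=
    groundEnergy_ball_le (g := fun _ => 0) monotoneOn_const le_rfl continuous_const hΩ' hne' hr'.le
      hvol'.le
  rw [rayleighInf_grushinEnergy_prod ha (fun x => hg0' (norm_nonneg x)) Metric.isOpen_ball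
      (Metric.nonempty_ball.2 hr) Metric.isOpen_ball (Metric.nonempty_ball.2 hr'),
    rayleighInf_grushinEnergy_prod ha (fun x => hg0' (norm_nonneg x)) hΩ hne hΩ' hne']
  refine (groundEnergy_mono_weight (by fun_prop) (by fun_prop)
    (fun x => mul_nonneg (hE _) (hg0' (norm_nonneg x)))
    (fun x => mul_le_mul_of_nonneg_right hFK (hg0' (norm_nonneg x)))
    Metric.isOpen_ball (Metric.nonempty_ball.2 hr)).trans ?_
  exact groundEnergy_ball_le (g := fun t => groundEnergy 0 Ω' * g t)
    (fun t ht u hu htu => mul_le_mul_of_nonneg_left (hg ht hu htu) (hE _))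
    (mul_nonneg (hE _) hg0) (by fun_prop) hΩ hne hr.le hvol.le

theorem tendsto_groundEnergy_zero_ball :
    Tendsto (fun r => groundEnergy 0 (Metric.ball (0 : F) r)) (𝓝[>] 0) atTop := by
  have hinv : Tendsto (fun r : ℝ => (r ^ 2)⁻¹) (𝓝[>] 0) atTop := by
    simpa only [inv_pow, Function.comp_def] using
      (tendsto_pow_atTop two_ne_zero).comp (tendsto_inv_nhdsGT_zero (𝕜 := ℝ))
  refine (hinv.atTop_mul_const (groundEnergy_zero_ball_pos (E := F) one_pos)).congr' ?_
  filter_upwards [self_mem_nhdsWithin] with r hr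
  exact (groundEnergy_zero_ball hr).symm

theorem sq_le_groundEnergy_mul_norm_rpow_ball {μ K r : ℝ} (hp : 0 ≤ p) (hμ : 0 ≤ μ) (hK : 0 < K)
    (hr : 0 < r) (h : r ≤ (4 * K)⁻¹ ∨ 6 * K ^ 2 ≤ μ * (4 * K)⁻¹ ^ p) :
    K ^ 2 ≤ groundEnergy (fun x : E => μ * ‖x‖ ^ p) (Metric.ball 0 r) := by
  have : Continuous fun x : E => ‖x‖ ^ p := continuous_norm.rpow_const fun _ => Or.inr hp
  refine sq_le_groundEnergy (by fun_prop) (fun x => by positivity) Metric.isOpen_ball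
    (Metric.nonempty_ball.2 hr) hK fun x hx hfar => ?_
  have hfar' : (4 * K)⁻¹ ≤ ‖x‖ := (inv_le_iff_one_le_mul₀' (by positivity)).2 hfar
  rcases h with h | h
  · exact absurd (h.trans hfar') (not_le.2 (mem_ball_zero_iff.1 hx))
  · refine h.trans (mul_le_mul_of_nonneg_left ?_ hμ)
    exact Real.rpow_le_rpow (by positivity) hfar' hp

theorem exists_radius_groundEnergy_mul_norm_rpow_ball_le (hp : 0 ≤ p) {e : ℝ → ℝ}
    (hec : ContinuousOn e (Ioi 0)) (he0 : ∀ r, 0 < r → 0 < e r) (he : Tendsto e atTop atTop) :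
    ∃ r₀, 0 < r₀ ∧ ∀ r, 0 < r →
      groundEnergy (fun x : E => e r₀ * ‖x‖ ^ p) (Metric.ball 0 r₀) ≤
        groundEnergy (fun x : E => e r * ‖x‖ ^ p) (Metric.ball 0 r) := by
  set f : ℝ → ℝ := fun r => groundEnergy (fun x : E => e r * ‖x‖ ^ p) (Metric.ball 0 r)
  have hf : ContinuousOn f (Ioi 0) := continuousOn_groundEnergy_mul_norm_rpow_ball hp hec he0
  have hfexp : Continuous fun t => f (Real.exp t) :=
    hf.comp_continuous Real.continuous_exp Real.exp_pos
  have hf1 : 0 ≤ f 1 := rayleighInf_nonneg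
    (schrodingerEnergy_nonneg fun x => mul_nonneg (he0 1 one_pos).le (by positivity)) _
  set K := f 1 + 1
  have hK : 0 < K := by positivity
  have hcoer {r : ℝ} (hr : 0 < r) (h : r ≤ (4 * K)⁻¹ ∨ 6 * K ^ 2 ≤ e r * (4 * K)⁻¹ ^ p) :
      f 1 ≤ f r := by
    refine le_trans ?_ (sq_le_groundEnergy_mul_norm_rpow_ball hp (he0 r hr).le hK hr h)
    nlinarith
  have hsmall : ∀ᶠ t in atBot, f 1 ≤ f (Real.exp t) := by
    filter_upwards [Real.tendsto_exp_atBot.eventually_le_const (by positivity : 0 < (4 * K)⁻¹)]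
      with t ht using hcoer (Real.exp_pos t) (Or.inl ht)
  have hlarge : ∀ᶠ t in atTop, f 1 ≤ f (Real.exp t) := by
    have hlim := (he.comp Real.tendsto_exp_atTop).atTop_mul_const
      (by positivity : 0 < (4 * K)⁻¹ ^ p)
    filter_upwards [hlim.eventually_ge_atTop (6 * K ^ 2)] with t ht
      using hcoer (Real.exp_pos t) (Or.inr ht)
  obtain ⟨t₀, ht₀⟩ := hfexp.exists_forall_le' 0 (by
    rw [cocompact_eq_atBot_atTop, Real.exp_zero]
    exact eventually_sup.2 ⟨hsmall, hlarge⟩)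
  refine ⟨Real.exp t₀, Real.exp_pos t₀, fun r hr => ?_⟩
  simpa only [Real.exp_log hr] using ht₀ (Real.log r)

theorem exists_radius_rayleighInf_grushinEnergy_le (hp : 0 ≤ p) {ρ : ℝ → ℝ}
    (hρc : ContinuousOn ρ (Ioi 0)) (hρ0 : ∀ r, 0 < r → 0 < ρ r) (hρ : Tendsto ρ atTop (𝓝 0)) :
    ∃ r₀, 0 < r₀ ∧ ∀ r, 0 < r →
      rayleighInf (grushinEnergy fun x => ‖x‖ ^ p)
          (Metric.ball (0 : E) r₀ ×ˢ Metric.ball (0 : F) (ρ r₀)) ≤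
        rayleighInf (grushinEnergy fun x => ‖x‖ ^ p)
          (Metric.ball (0 : E) r ×ˢ Metric.ball (0 : F) (ρ r)) := by
  have hsep {r : ℝ} (hr : 0 < r) := rayleighInf_grushinEnergy_prod
    (a := fun x : E => ‖x‖ ^ p) (Ω := Metric.ball 0 r) (Ω' := Metric.ball (0 : F) (ρ r))
    (continuous_norm.rpow_const fun _ => Or.inr hp) (fun x => by positivity)
    Metric.isOpen_ball (Metric.nonempty_ball.2 hr) Metric.isOpen_ball
    (Metric.nonempty_ball.2 (hρ0 r hr))
  have hec : ContinuousOn (fun r => groundEnergy 0 (Metric.ball (0 : F) (ρ r))) (Ioi 0) :=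
    (((hρc.pow 2).inv₀ fun r hr => pow_ne_zero 2 (hρ0 r hr).ne').mul continuousOn_const).congr
      fun r hr => groundEnergy_zero_ball (hρ0 r hr)
  have he := (tendsto_groundEnergy_zero_ball (F := F)).comp (tendsto_nhdsWithin_iff.2
    ⟨hρ, (eventually_gt_atTop 0).mono hρ0⟩)
  obtain ⟨r₀, hr₀, hmin⟩ := exists_radius_groundEnergy_mul_norm_rpow_ball_le (E := E) hp hec
    (fun r hr => groundEnergy_zero_ball_pos (hρ0 r hr)) he
  exact ⟨r₀, hr₀, fun r hr => by simpa only [hsep hr₀, hsep hr] using hmin r hr⟩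

end ProductsOfBalls

section Euclidean

theorem tau_pos (d : ℕ) : 0 < tau d :=
  div_pos (Real.rpow_pos_of_pos Real.pi_pos _) (Real.Gamma_pos_of_pos (by positivity))

theorem volume_real_ball_eq_tau_mul_pow {d : ℕ} (hd : 1 ≤ d) {r : ℝ} (hr : 0 ≤ r) :
    volume.real (Metric.ball (0 : EuclideanSpace ℝ (Fin d)) r) = tau d * r ^ d := by
  have : NeZero d := ⟨by omega⟩
  have hpi : √Real.pi ^ d = Real.pi ^ ((d : ℝ) / 2) := by
    rw [Real.sqrt_eq_rpow, ← Real.rpow_mul_natCast Real.pi_pos.le, one_div_mul_eq_div]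
  rw [measureReal_def, EuclideanSpace.volume_ball, Fintype.card_fin, hpi, add_comm, ← tau,
    ENNReal.toReal_mul, ENNReal.toReal_pow, ENNReal.toReal_ofReal hr,
    ENNReal.toReal_ofReal (tau_pos d).le, mul_comm]

/-- The radius `ρ` for which `B^{d₁}(0, r) × B^{d₂}(0, ρ)` has volume `V`. -/
noncomputable def complementaryRadius (d₁ d₂ : ℕ) (V r : ℝ) : ℝ :=
  (V / (tau d₁ * r ^ d₁ * tau d₂)) ^ (d₂ : ℝ)⁻¹

variable {d₁ d₂ : ℕ} {V r r' : ℝ}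

theorem complementaryRadius_pos (d₁ d₂ : ℕ) (hV : 0 < V) (hr : 0 < r) :
    0 < complementaryRadius d₁ d₂ V r := by
  have := tau_pos d₁
  have := tau_pos d₂
  exact Real.rpow_pos_of_pos (by positivity) _

theorem eq_complementaryRadius_iff (d₁ : ℕ) (hd₂ : 1 ≤ d₂) (hV : 0 < V) (hr : 0 < r)
    (hr' : 0 ≤ r') :
    r' = complementaryRadius d₁ d₂ V r ↔ tau d₁ * r ^ d₁ * (tau d₂ * r' ^ d₂) = V := by
  have := tau_pos d₁
  have := tau_pos d₂
  rw [complementaryRadius, Real.eq_rpow_inv hr' (by positivity) (by positivity), Real.rpow_natCast,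
    eq_div_iff (by positivity)]
  ring_nf

theorem continuousOn_complementaryRadius (d₁ d₂ : ℕ) (V : ℝ) :
    ContinuousOn (complementaryRadius d₁ d₂ V) (Ioi 0) := by
  have := tau_pos d₁
  have := tau_pos d₂
  refine ContinuousOn.rpow_const (continuousOn_const.div (by fun_prop) fun r hr => ?_)
    fun _ _ => Or.inr (by positivity)
  have : 0 < r := hr
  positivity

theorem tendsto_complementaryRadius_atTop (hd₁ : 1 ≤ d₁) (hd₂ : 1 ≤ d₂) (V : ℝ) :
    Tendsto (complementaryRadius d₁ d₂ V) atTop (𝓝 0) := by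
  have hvol : Tendsto (fun r : ℝ => V / (tau d₁ * r ^ d₁ * tau d₂)) atTop (𝓝 0) :=
    (((tendsto_pow_atTop (by omega)).const_mul_atTop (tau_pos d₁)).atTop_mul_const
      (tau_pos d₂)).const_div_atTop V
  have hexp : 0 < (d₂ : ℝ)⁻¹ := by positivity
  have hlim := hvol.rpow_const (Or.inr hexp.le)
  rwa [Real.zero_rpow hexp.ne'] at hlim

theorem exists_pos_volume_eq_ball {d : ℕ} (hd : 1 ≤ d) {Ω : Set (EuclideanSpace ℝ (Fin d))}
    (hΩ : volume.real Ω ≠ 0) :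
    ∃ r, 0 < r ∧ volume Ω = volume (Metric.ball (0 : EuclideanSpace ℝ (Fin d)) r) ∧
      volume.real Ω = tau d * r ^ d := by
  have : Nonempty (Fin d) := ⟨⟨0, hd⟩⟩
  obtain ⟨h0, htop⟩ := ENNReal.toReal_ne_zero.1 hΩ
  obtain ⟨r, hr, hvol⟩ := exists_volume_ball_eq (E := EuclideanSpace ℝ (Fin d)) htop
  refine ⟨r, hr.lt_of_ne' fun h => ?_, hvol.symm, ?_⟩
  · rw [h, Metric.ball_zero, measure_empty] at hvol
    exact h0 hvol.symm
  · rw [← volume_real_ball_eq_tau_mul_pow hd hr, measureReal_def, measureReal_def, hvol]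

end Euclidean

theorem exists_minimizing_product_of_balls_general (d₁ d₂ : ℕ) (hd₁ : 1 ≤ d₁) (hd₂ : 1 ≤ d₂)
    (s : ℝ) (hs : 0 ≤ s) (V : ℝ) (hV : 0 < V) :
    ∃ r₁ r₂ : ℝ, 0 < r₁ ∧ 0 < r₂ ∧
      tau d₁ * r₁ ^ d₁ * (tau d₂ * r₂ ^ d₂) = V ∧
      ∀ (Ω₁ : Set (EuclideanSpace ℝ (Fin d₁))) (Ω₂ : Set (EuclideanSpace ℝ (Fin d₂))),
        IsOpen Ω₁ → IsOpen Ω₂ → (volume Ω₁).toReal * (volume Ω₂).toReal = V →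
        grushinLambda1 d₁ d₂ s
            ((Metric.ball (0 : EuclideanSpace ℝ (Fin d₁)) r₁) ×ˢ
              (Metric.ball (0 : EuclideanSpace ℝ (Fin d₂)) r₂)) ≤
          grushinLambda1 d₁ d₂ s (Ω₁ ×ˢ Ω₂) := by
  have : Nonempty (Fin d₁) := ⟨⟨0, hd₁⟩⟩
  have : Nonempty (Fin d₂) := ⟨⟨0, hd₂⟩⟩
  have hp : 0 ≤ 2 * s := by positivity
  have hρ (r : ℝ) : 0 < r → 0 < complementaryRadius d₁ d₂ V r := complementaryRadius_pos d₁ d₂ hV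
  obtain ⟨r₀, hr₀, hmin⟩ := exists_radius_rayleighInf_grushinEnergy_le
    (E := EuclideanSpace ℝ (Fin d₁)) (F := EuclideanSpace ℝ (Fin d₂)) hp
    (continuousOn_complementaryRadius d₁ d₂ V) hρ (tendsto_complementaryRadius_atTop hd₁ hd₂ V)
  refine ⟨r₀, complementaryRadius d₁ d₂ V r₀, hr₀, hρ r₀ hr₀,
    (eq_complementaryRadius_iff d₁ hd₂ hV hr₀ (hρ r₀ hr₀).le).1 rfl, fun Ω₁ Ω₂ hΩ₁ hΩ₂ hvol => ?_⟩
  have hne := mul_ne_zero_iff.1 (hvol.trans_ne hV.ne')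
  obtain ⟨r, hr, hball, hreal⟩ := exists_pos_volume_eq_ball hd₁ hne.1
  obtain ⟨r', hr', hball', hreal'⟩ := exists_pos_volume_eq_ball hd₂ hne.2
  obtain rfl := (eq_complementaryRadius_iff d₁ hd₂ hV hr hr'.le).2 (by
    rw [← hreal, ← hreal']; exact hvol)
  simp only [grushinLambda1_eq_rayleighInf]
  exact (hmin r hr).trans (rayleighInf_grushinEnergy_ball_prod_ball_le (g := fun t => t ^ (2 * s))
    (Real.monotoneOn_rpow_Ici_of_exponent_nonneg hp) (Real.rpow_nonneg le_rfl _)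
    (Real.continuous_rpow_const hp) hΩ₁ hΩ₂ hr hr' hball hball')

/-- existence of a product of balls minimizing the first Grushin
eigenvalue among cartesian product domains of total volume `V`. -/
theorem exists_minimizing_product_of_balls (d₁ d₂ : ℕ) (hd₁ : 1 ≤ d₁) (hd₂ : 1 ≤ d₂)
    (s : ℝ) (hs : 0 < s) (V : ℝ) (hV : 0 < V) :
    ∃ r₁ r₂ : ℝ, 0 < r₁ ∧ 0 < r₂ ∧
      tau d₁ * r₁ ^ d₁ * (tau d₂ * r₂ ^ d₂) = V ∧
      ∀ (Ω₁ : Set (EuclideanSpace ℝ (Fin d₁))) (Ω₂ : Set (EuclideanSpace ℝ (Fin d₂))),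
        IsOpen Ω₁ → IsConnected Ω₁ → Bornology.IsBounded Ω₁ →
        IsOpen Ω₂ → IsConnected Ω₂ → Bornology.IsBounded Ω₂ →
        (volume Ω₁).toReal * (volume Ω₂).toReal = V →
        grushinLambda1 d₁ d₂ s
            ((Metric.ball (0 : EuclideanSpace ℝ (Fin d₁)) r₁) ×ˢ
              (Metric.ball (0 : EuclideanSpace ℝ (Fin d₂)) r₂)) ≤
          grushinLambda1 d₁ d₂ s (Ω₁ ×ˢ Ω₂) := by
  obtain ⟨r₁, r₂, hr₁, hr₂, hvol, hmin⟩ :=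
    exists_minimizing_product_of_balls_general d₁ d₂ hd₁ hd₂ s hs.le V hV
  exact ⟨r₁, r₂, hr₁, hr₂, hvol, fun Ω₁ Ω₂ ho₁ _ _ ho₂ _ _ => hmin Ω₁ Ω₂ ho₁ ho₂⟩
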